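/- arXiv:1712.03938 — 4 statements merged into one kernel-verified Lean document; each statement's English description precedes it below -/
import Mathlib

section
/- Let $A = \mathbb{Q}[y_1,\ldots,y_n]$ (positively graded, with each $y_i$ of positive degree) and let $(C, d)$ be a finite complex of finitely generated free graded $A$-modules, so $C = C_0 \otimes_{\mathbb{Q}} A$ for a finite-dimensional-in-each-degree graded vector space $C_0$, with $C_0$ inheriting the induced differential $d_0$ (the $y$-degree-zero part of $d$). If $H^*(C) \cong H^*(C_0) \otimes_{\mathbb{Q}} A$ as graded vector spaces, then $H^*(C)$ is a free $A$-module. -/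
set_option synthInstance.maxHeartbeats 1000000
set_option maxHeartbeats 1000000

open MvPolynomial

/-- `A = ℚ[y₁,…,y_n]`, positively graded with each `yᵢ` in degree `1`. -/
abbrev Ay (n : ℕ) : Type := MvPolynomial (Fin n) ℚ

/-- A finite complex of finitely generated free graded `A`-modules, presented by
homogeneous matrices: in homological degree `k` the module is free on `r k`
generators, the `i`-th generator sitting in internal degree `g k i`, and the
differential `C_k → C_{k+1}` is given by the matrix `D k`, whose entries are
homogeneous of the appropriate degrees. -/
structure GradedFreeComplex (n : ℕ) where
  r : ℤ → ℕ
  bounded : ∃ N : ℕ, ∀ k : ℤ, (N : ℤ) < |k| → r k = 0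
  g : ∀ k : ℤ, Fin (r k) → ℤ
  D : ∀ k : ℤ, Matrix (Fin (r (k + 1))) (Fin (r k)) (Ay n)
  hom : ∀ k i j, (D k i j).IsHomogeneous (g k j - g (k + 1) i).toNat
  hneg : ∀ k i j, g k j < g (k + 1) i → D k i j = 0
  dd : ∀ k, D (k + 1) * D k = 0

namespace GradedFreeComplex

variable {n : ℕ} (C : GradedFreeComplex n)

/-- The cycles of the complex at homological position `k + 1`. -/
noncomputable def cycles (k : ℤ) : Submodule (Ay n) (Fin (C.r (k + 1)) → Ay n) :=
  LinearMap.ker (C.D (k + 1)).mulVecLin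

/-- The boundaries, viewed inside the cycles at position `k + 1`. -/
noncomputable def boundaries (k : ℤ) : Submodule (Ay n) (C.cycles k) :=
  (LinearMap.range (C.D k).mulVecLin).comap (C.cycles k).subtype

/-- The homology of the complex at position `k + 1`. -/
noncomputable def Hml (k : ℤ) : Type := C.cycles k ⧸ C.boundaries k

noncomputable instance (k : ℤ) : AddCommGroup (C.Hml k) :=
  inferInstanceAs (AddCommGroup (C.cycles k ⧸ C.boundaries k))
noncomputable instance (k : ℤ) : Module (Ay n) (C.Hml k) :=
  inferInstanceAs (Module (Ay n) (C.cycles k ⧸ C.boundaries k))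
noncomputable instance (k : ℤ) : Module ℚ (C.Hml k) :=
  inferInstanceAs (Module ℚ (C.cycles k ⧸ C.boundaries k))

/-- The degree-`m` graded piece of `A` (zero for `m < 0`). -/
noncomputable def pieceA (n : ℕ) (m : ℤ) : Submodule ℚ (Ay n) :=
  if m < 0 then ⊥ else homogeneousSubmodule (Fin n) ℚ m.toNat

/-- The internal-degree-`j` graded piece of the chain module at position `k`. -/
noncomputable def piece (k j : ℤ) : Submodule ℚ (Fin (C.r k) → Ay n) :=
  Submodule.pi Set.univ fun i => pieceA n (j - C.g k i)

/-- The internal-degree-`j` graded piece of the homology at position `k + 1`. -/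
noncomputable def Hpiece (k j : ℤ) : Submodule ℚ (C.Hml k) :=
  ((C.piece (k + 1) j).comap ((C.cycles k).subtype.restrictScalars ℚ)).map
    ((C.boundaries k).mkQ.restrictScalars ℚ)

/-- The specialization of the differential at a point `ν ∈ ℚⁿ`
(for `ν = 0` this is the complex `C₀ = C ⊗_A ℚ`). -/
noncomputable def Dspec (ν : Fin n → ℚ) (k : ℤ) :
    Matrix (Fin (C.r (k + 1))) (Fin (C.r k)) ℚ :=
  (C.D k).map (eval ν)

/-- The cycles of the specialized complex at position `k + 1`. -/
noncomputable def cyclesSpec (ν : Fin n → ℚ) (k : ℤ) :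
    Submodule ℚ (Fin (C.r (k + 1)) → ℚ) :=
  LinearMap.ker (C.Dspec ν (k + 1)).mulVecLin

/-- The homology of the specialized complex at position `k + 1`. -/
noncomputable def HmlSpec (ν : Fin n → ℚ) (k : ℤ) : Type :=
  C.cyclesSpec ν k ⧸
    ((LinearMap.range (C.Dspec ν k).mulVecLin).comap (C.cyclesSpec ν k).subtype)

noncomputable instance (ν : Fin n → ℚ) (k : ℤ) : AddCommGroup (C.HmlSpec ν k) :=
  inferInstanceAs (AddCommGroup (_ ⧸ _))
noncomputable instance (ν : Fin n → ℚ) (k : ℤ) : Module ℚ (C.HmlSpec ν k) :=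
  inferInstanceAs (Module ℚ (_ ⧸ _))

/-- The internal-degree-`j` piece of the chain module of `C₀`: vectors supported on
the generators of internal degree `j`. -/
noncomputable def piece0 (k j : ℤ) : Submodule ℚ (Fin (C.r k) → ℚ) :=
  Submodule.pi Set.univ fun i => if C.g k i = j then ⊤ else ⊥

/-- The internal-degree-`j` graded piece of the homology of `C₀` at position `k+1`. -/
noncomputable def H0piece (k j : ℤ) : Submodule ℚ (C.HmlSpec 0 k) :=
  ((C.piece0 (k + 1) j).comap (C.cyclesSpec 0 k).subtype).map
    ((LinearMap.range (C.Dspec 0 k).mulVecLin).comap (C.cyclesSpec 0 k).subtype).mkQ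

end GradedFreeComplex

/-- The dimension of the degree-`m` graded piece of `A = ℚ[y₁,…,y_n]`. -/
noncomputable def dimA (n : ℕ) (m : ℤ) : ℕ :=
  Module.finrank ℚ (GradedFreeComplex.pieceA n m)

namespace FreeAux

open GradedFreeComplex

theorem mem_pieceA_of_neg {n : ℕ} {m : ℤ} (hm : m < 0) {x : Ay n} (hx : x ∈ pieceA n m) :
    x = 0 := by
  simpa [pieceA, hm] using hx

theorem mem_pieceA_of_nonneg {n : ℕ} {m : ℤ} (hm : 0 ≤ m) {x : Ay n} :
    x ∈ pieceA n m ↔ x.IsHomogeneous m.toNat := by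
  simp [pieceA, not_lt.mpr hm]

theorem pieceA_mul {n : ℕ} {a b c : ℤ} {x y : Ay n} (hx : x ∈ pieceA n a)
    (hy : y ∈ pieceA n b) (h : a + b = c) : x * y ∈ pieceA n c := by
  rcases lt_or_ge a 0 with ha | ha
  · rw [mem_pieceA_of_neg ha hx, zero_mul]; exact Submodule.zero_mem _
  rcases lt_or_ge b 0 with hb | hb
  · rw [mem_pieceA_of_neg hb hy, mul_zero]; exact Submodule.zero_mem _
  rw [mem_pieceA_of_nonneg ha] at hx
  rw [mem_pieceA_of_nonneg hb] at hy
  rw [mem_pieceA_of_nonneg (by omega)]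
  have := hx.mul hy
  rwa [show a.toNat + b.toNat = c.toNat by omega] at this

theorem eval_pieceA {n : ℕ} {m : ℤ} (hm : m ≠ 0) {x : Ay n} (hx : x ∈ pieceA n m) :
    eval (0 : Fin n → ℚ) x = 0 := by
  rcases lt_or_ge m 0 with ha | ha
  · rw [mem_pieceA_of_neg ha hx, map_zero]
  rw [mem_pieceA_of_nonneg ha] at hx
  rw [MvPolynomial.eval_zero]
  exact hx.coeff_eq_zero (by simp; omega)

theorem C_mem_pieceA {n : ℕ} {m : ℤ} (hm : m = 0) (c : ℚ) : (C c : Ay n) ∈ pieceA n m := by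
  subst hm
  rw [mem_pieceA_of_nonneg le_rfl]
  exact isHomogeneous_C _ _

theorem eq_C_of_pieceA {n : ℕ} {m : ℤ} (hm : m = 0) {x : Ay n} (hx : x ∈ pieceA n m) :
    x = C (eval (0 : Fin n → ℚ) x) := by
  subst hm
  rw [mem_pieceA_of_nonneg le_rfl] at hx
  have h := totalDegree_eq_zero_iff_eq_C.mp ((MvPolynomial.totalDegree_zero_iff_isHomogeneous _).mpr hx)
  rw [MvPolynomial.eval_zero]
  exact h

theorem finite_pieceA (n : ℕ) (m : ℤ) : Module.Finite ℚ (pieceA n m) := by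
  rw [Module.Finite.iff_fg]
  unfold pieceA
  split_ifs
  · exact Submodule.fg_bot
  · exact homogeneousSubmodule_fg _ _ _

/-- Graded Nakayama. -/
theorem nak {n r : ℕ} (g : Fin r → ℤ) {ι : Type} [Fintype ι] (deg : ι → ℤ)
    (w : ι → Fin r → Ay n) (hw : ∀ l i, w l i ∈ pieceA n (deg l - g i))
    (hspan : ∀ x : Fin r → ℚ, ∃ c : ι → ℚ, ∀ i, ∑ l, c l * eval 0 (w l i) = x i) :
    ∀ i, ∃ a : ι → Ay n, (∀ l, a l ∈ pieceA n (g i - deg l)) ∧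
      ∀ i', ∑ l, a l * w l i' = if i' = i then 1 else 0 := by
  obtain ⟨lo, hlo⟩ : ∃ lo : ℤ, ∀ i, lo ≤ g i := by
    obtain ⟨lo, h⟩ := (Set.finite_range g).bddBelow
    exact ⟨lo, fun i => h ⟨i, rfl⟩⟩
  suffices H : ∀ m : ℕ, ∀ i, g i < lo + m → ∃ a : ι → Ay n, (∀ l, a l ∈ pieceA n (g i - deg l)) ∧
      ∀ i', ∑ l, a l * w l i' = if i' = i then 1 else 0 by
    intro i
    exact H (g i - lo + 1).toNat i (by have := hlo i; omega)
  intro m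
  induction m with
  | zero => intro i hi; have := hlo i; simp at hi; omega
  | succ m ih =>
    intro i hi
    obtain ⟨c, hc⟩ := hspan (fun i' => if i' = i then 1 else 0)
    let c' : ι → Ay n := fun l => if deg l = g i then C (c l) else 0
    have hc' : ∀ l, c' l ∈ pieceA n (g i - deg l) := by
      intro l
      simp only [c']
      split_ifs with h
      · exact C_mem_pieceA (by omega) _
      · exact Submodule.zero_mem _
    have ih' : ∀ i', ∃ a : ι → Ay n, g i' < g i → (∀ l, a l ∈ pieceA n (g i' - deg l)) ∧
      ∀ i'', ∑ l, a l * w l i'' = if i'' = i' then 1 else 0 := by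
      intro i'
      by_cases h : g i' < g i
      · obtain ⟨a, ha⟩ := ih i' (by push_cast at hi; omega)
        exact ⟨a, fun _ => ha⟩
      · exact ⟨0, fun h' => absurd h' h⟩
    choose a ha using ih'
    let R : Fin r → Ay n := fun i' => if g i' < g i then ∑ l, c' l * w l i' else 0
    have hR : ∀ i', R i' ∈ pieceA n (g i - g i') := by
      intro i'
      simp only [R]
      split_ifs
      · exact Submodule.sum_mem _ fun l _ => pieceA_mul (hc' l) (hw l i') (by ring)
      · exact Submodule.zero_mem _
    have key : ∀ i', ∑ l, c' l * w l i' = (if i' = i then 1 else 0) + R i' := by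
      intro i'
      rcases lt_trichotomy (g i') (g i) with h | h | h
      · have : i' ≠ i := by rintro rfl; omega
        simp [R, h, this]
      · have h2 := congrArg (C (σ := Fin n)) (hc i')
        simp only [R, h, lt_irrefl, if_false, add_zero]
        rw [map_sum] at h2
        have h3 : (C (if i' = i then (1:ℚ) else 0) : Ay n) = if i' = i then 1 else 0 := by
          split_ifs <;> simp
        rw [← h3, ← h2]
        refine Finset.sum_congr rfl fun l _ => ?_
        simp only [c']
        split_ifs with h4
        · rw [C_mul, ← eq_C_of_pieceA (by omega) (hw l i')]
        · rw [eval_pieceA (by omega) (hw l i')]; simp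
      · have h1 : i' ≠ i := by rintro rfl; omega
        simp only [R, h1, if_false, not_lt.mpr h.le, add_zero]
        refine Finset.sum_eq_zero fun l _ => ?_
        simp only [c']
        split_ifs with h4
        · rw [mem_pieceA_of_neg (by omega) (hw l i'), mul_zero]
        · simp
    refine ⟨fun l => c' l - ∑ i', R i' * a i' l, ?_, ?_⟩
    · intro l
      refine Submodule.sub_mem _ (hc' l) (Submodule.sum_mem _ fun i' _ => ?_)
      by_cases h : g i' < g i
      · exact pieceA_mul (hR i') ((ha i' h).1 l) (by ring)
      · simp only [R, h, if_false, zero_mul]; exact Submodule.zero_mem _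
    · intro i''
      simp only [sub_mul, Finset.sum_sub_distrib, Finset.sum_mul]
      rw [Finset.sum_comm, key]
      have : ∀ i', ∑ l, R i' * a i' l * w l i'' = if i'' = i' then R i' else 0 := by
        intro i'
        by_cases h : g i' < g i
        · simp only [mul_assoc]
          rw [← Finset.mul_sum, (ha i' h).2]
          split_ifs <;> simp
        · simp [R, h]
      simp [this]

/-- Linear independence can be checked at the origin. -/
theorem linInd {n r : ℕ} {ι : Type} [Fintype ι] (w : ι → Fin r → Ay n)
    (h : LinearIndependent ℚ (fun l i => eval (0 : Fin n → ℚ) (w l i) : ι → Fin r → ℚ)) :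
    LinearIndependent (Ay n) w := by
  classical
  obtain ⟨f, hf⟩ := LinearMap.exists_leftInverse_of_injective
    (Fintype.linearCombination ℚ (fun l i => eval (0 : Fin n → ℚ) (w l i) : ι → Fin r → ℚ))
    (LinearMap.ker_eq_bot.mpr h.fintypeLinearCombination_injective)
  let F : Matrix ι (Fin r) ℚ := LinearMap.toMatrix' f
  let W : Matrix (Fin r) ι (Ay n) := fun i l => w l i
  let FC : Matrix ι (Fin r) (Ay n) := F.map C
  let M : Matrix ι ι (Ay n) := FC * W
  have hM : M.map (eval (0 : Fin n → ℚ)) = 1 := by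
    have e1 : F * W.map (eval (0 : Fin n → ℚ)) = 1 := by
      have : W.map (eval (0 : Fin n → ℚ)) = LinearMap.toMatrix' (Fintype.linearCombination ℚ
          (fun l i => eval (0 : Fin n → ℚ) (w l i) : ι → Fin r → ℚ)) := by
        ext i l
        rw [LinearMap.toMatrix'_apply, Fintype.linearCombination_apply_single,
          one_smul]
        rfl
      rw [this, ← LinearMap.toMatrix'_comp, hf, LinearMap.toMatrix'_id]
    have : M.map (eval (0 : Fin n → ℚ)) = FC.map (eval (0 : Fin n → ℚ)) *
        W.map (eval (0 : Fin n → ℚ)) := Matrix.map_mul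
    rw [this, ← e1]
    congr 1
    ext i j
    simp [FC]
  have hdet : M.det ≠ 0 := by
    intro h0
    have := RingHom.map_det (eval (0 : Fin n → ℚ)) M
    rw [h0, RingHom.mapMatrix_apply, hM] at this
    simp at this
  rw [Fintype.linearIndependent_iff]
  intro a ha
  have hWa : W.mulVec a = 0 := by
    ext1 i
    have := congrFun ha i
    simpa [W, Matrix.mulVec, dotProduct, mul_comm] using this
  have : M.mulVec a = 0 := by
    simp only [M]
    rw [← Matrix.mulVec_mulVec, hWa, Matrix.mulVec_zero]
  exact congrFun (Matrix.eq_zero_of_mulVec_eq_zero hdet this)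

/-- The linear algebra comparison. -/
theorem compare {Z H F : Type} [AddCommGroup Z] [Module ℚ Z] [AddCommGroup H] [Module ℚ H]
    [AddCommGroup F] [Module ℚ F] (P : Submodule ℚ Z) [Module.Finite ℚ P]
    (q : Z →ₗ[ℚ] H) (p : Z →ₗ[ℚ] F) (Fj : Submodule ℚ F) [Module.Finite ℚ Fj]
    (h1 : ∀ x ∈ P, p x = 0 → q x = 0) (h2 : P.map p ≤ Fj)
    (h3 : Module.finrank ℚ Fj ≤ Module.finrank ℚ (P.map q)) :
    P.map p = Fj ∧ ∀ x ∈ P, q x = 0 → p x = 0 := by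
  have eq : Module.finrank ℚ (P.map q) +
      Module.finrank ℚ (LinearMap.ker (q.domRestrict P)) = Module.finrank ℚ P := by
    rw [← LinearMap.range_domRestrict]; exact LinearMap.finrank_range_add_finrank_ker _
  have ep : Module.finrank ℚ (P.map p) +
      Module.finrank ℚ (LinearMap.ker (p.domRestrict P)) = Module.finrank ℚ P := by
    rw [← LinearMap.range_domRestrict]; exact LinearMap.finrank_range_add_finrank_ker _
  have hle : LinearMap.ker (p.domRestrict P) ≤ LinearMap.ker (q.domRestrict P) := by
    intro x hx
    exact h1 x x.2 hx
  have l1 := Submodule.finrank_mono hle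
  have l2 := Submodule.finrank_mono h2
  refine ⟨Submodule.eq_of_le_of_finrank_eq h2 (by omega), ?_⟩
  have e := Submodule.eq_of_le_of_finrank_eq hle (by omega)
  intro x hx hq
  have : (⟨x, hx⟩ : P) ∈ LinearMap.ker (p.domRestrict P) := by
    rw [e]; exact hq
  exact this

end FreeAux
namespace FreeAux

open GradedFreeComplex

theorem colsel {a b : ℕ} (M : Matrix (Fin a) (Fin b) ℚ) :
    ∃ (S : Type) (_ : Fintype S) (σ : S → Fin b),
      LinearIndependent ℚ (fun s i => M i (σ s) : S → Fin a → ℚ) ∧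
      ∀ x, ∃ c : S → ℚ, ∀ i, ∑ s, c s * M i (σ s) = M.mulVec x i := by
  obtain ⟨S, σ, hσ, hsp, hli⟩ := exists_linearIndependent' ℚ (fun j i => M i j : Fin b → Fin a → ℚ)
  have : Finite S := Finite.of_injective σ hσ
  letI : Fintype S := Fintype.ofFinite S
  refine ⟨S, inferInstance, σ, hli, fun x => ?_⟩
  have hx : M.mulVec x ∈ Submodule.span ℚ (Set.range (fun j i => M i j : Fin b → Fin a → ℚ)) := by
    rw [Submodule.mem_span_range_iff_exists_fun]
    refine ⟨x, ?_⟩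
    ext i
    simp [Matrix.mulVec, dotProduct, mul_comm]
  rw [← hsp, Submodule.mem_span_range_iff_exists_fun] at hx
  obtain ⟨c, hc⟩ := hx
  refine ⟨c, fun i => ?_⟩
  rw [← hc]
  simp

theorem D_mem {n : ℕ} (C : GradedFreeComplex n) (k : ℤ) (i j) :
    C.D k i j ∈ pieceA n (C.g k j - C.g (k + 1) i) := by
  rcases lt_or_ge (C.g k j) (C.g (k + 1) i) with h | h
  · rw [C.hneg k i j h]; exact Submodule.zero_mem _
  · rw [mem_pieceA_of_nonneg (by omega)]; exact C.hom k i j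

theorem Dspec_zero {n : ℕ} (C : GradedFreeComplex n) (k : ℤ) (i j)
    (h : C.g k j ≠ C.g (k + 1) i) : C.Dspec 0 k i j = 0 :=
  eval_pieceA (by omega) (D_mem C k i j)

theorem Dspec_dd {n : ℕ} (C : GradedFreeComplex n) (k : ℤ) :
    C.Dspec 0 (k + 1) * C.Dspec 0 k = 0 := by
  unfold Dspec
  rw [← Matrix.map_mul, C.dd]
  ext; simp

theorem mem_piece0 {n : ℕ} (C : GradedFreeComplex n) (k e : ℤ) (x) :
    x ∈ C.piece0 k e ↔ ∀ i, C.g k i ≠ e → x i = 0 := by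
  unfold piece0
  rw [Submodule.mem_pi]
  refine ⟨fun h i hi => ?_, fun h i _ => ?_⟩
  · have := h i (Set.mem_univ _)
    simpa [hi] using this
  · split_ifs with hi
    · trivial
    · exact h i hi

/-- projection to degree `e`. -/
def proj {n : ℕ} (C : GradedFreeComplex n) (k e : ℤ) (x : Fin (C.r k) → ℚ) : Fin (C.r k) → ℚ :=
  fun i => if C.g k i = e then x i else 0

theorem proj_mem {n : ℕ} (C : GradedFreeComplex n) (k e : ℤ) (x) :
    proj C k e x ∈ C.piece0 k e := by
  rw [mem_piece0]
  intro i hi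
  simp [proj, hi]

theorem proj_cycle {n : ℕ} (C : GradedFreeComplex n) (k e : ℤ) (x)
    (hx : (C.Dspec 0 k).mulVec x = 0) : (C.Dspec 0 k).mulVec (proj C k e x) = 0 := by
  ext i
  by_cases h : C.g (k + 1) i = e
  · rw [← hx]
    simp only [Matrix.mulVec, dotProduct]
    refine Finset.sum_congr rfl fun j _ => ?_
    by_cases hj : C.g k j = e
    · simp [proj, hj]
    · rw [Dspec_zero C k i j (by omega)]; simp
  · simp only [Matrix.mulVec, dotProduct, Pi.zero_apply]
    refine Finset.sum_eq_zero fun j _ => ?_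
    by_cases hj : C.g k j = e
    · rw [Dspec_zero C k i j (by omega)]; simp
    · simp [proj, hj]

/-- class of a cycle -/
noncomputable def cls {n : ℕ} (C : GradedFreeComplex n) (k : ℤ) :
    C.cyclesSpec 0 k →ₗ[ℚ] C.HmlSpec 0 k :=
  ((LinearMap.range (C.Dspec 0 k).mulVecLin).comap (C.cyclesSpec 0 k).subtype).mkQ

theorem cls_eq_zero {n : ℕ} (C : GradedFreeComplex n) (k : ℤ) (x) :
    cls C k x = 0 ↔ ∃ v, (C.Dspec 0 k).mulVec v = x := by
  unfold cls
  have := Submodule.Quotient.mk_eq_zero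
    ((LinearMap.range (C.Dspec 0 k).mulVecLin).comap (C.cyclesSpec 0 k).subtype) (x := x)
  exact this.trans (by simp)

theorem finite_HmlSpec {n : ℕ} (C : GradedFreeComplex n) (k : ℤ) :
    Module.Finite ℚ (C.HmlSpec 0 k) :=
  inferInstanceAs (Module.Finite ℚ (C.cyclesSpec 0 k ⧸
    ((LinearMap.range (C.Dspec 0 k).mulVecLin).comap (C.cyclesSpec 0 k).subtype)))

theorem exists_T {n : ℕ} (C : GradedFreeComplex n) (k : ℤ) :
    ∃ (T : Type) (_ : Fintype T) (deg : T → ℤ) (h : T → C.cyclesSpec 0 k),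
      (∀ t, (h t : Fin (C.r (k + 1)) → ℚ) ∈ C.piece0 (k + 1) (deg t)) ∧
      LinearIndependent ℚ (fun t => cls C k (h t)) ∧
      ∀ x : C.cyclesSpec 0 k, ∃ (c : T → ℚ) (v : Fin (C.r k) → ℚ),
        (C.Dspec 0 k).mulVec v + ∑ t, c t • (h t : Fin (C.r (k + 1)) → ℚ) = x := by
  let J : Type := {p : ℤ × C.cyclesSpec 0 k // (p.2 : Fin (C.r (k + 1)) → ℚ) ∈ C.piece0 (k + 1) p.1}
  let f : J → C.HmlSpec 0 k := fun p => cls C k p.1.2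
  obtain ⟨T, τ, hτ, hsp, hli⟩ := exists_linearIndependent' ℚ f
  have := finite_HmlSpec C k
  have : Finite T := hli.finite
  letI : Fintype T := Fintype.ofFinite T
  refine ⟨T, inferInstance, fun t => (τ t).1.1, fun t => (τ t).1.2, fun t => (τ t).2, hli, ?_⟩
  intro x
  have hx : cls C k x ∈ Submodule.span ℚ (Set.range f) := by
    let E : Finset ℤ := Finset.univ.image (C.g (k + 1))
    have hc : ∀ e, proj C (k + 1) e x ∈ C.cyclesSpec 0 k := fun e =>
      proj_cycle C (k + 1) e x x.2
    have : x = ∑ e ∈ E, (⟨proj C (k + 1) e x, hc e⟩ : C.cyclesSpec 0 k) := by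
      apply Subtype.ext
      ext i
      simp [proj, E, Finset.sum_apply]
    rw [this, map_sum]
    refine Submodule.sum_mem _ fun e _ => Submodule.subset_span ?_
    exact ⟨⟨(e, ⟨proj C (k + 1) e x, hc e⟩), proj_mem C (k + 1) e x⟩, rfl⟩
  rw [← hsp, Submodule.mem_span_range_iff_exists_fun] at hx
  obtain ⟨c, hc⟩ := hx
  have h0 : cls C k (x - ∑ t, c t • (τ t).1.2) = 0 := by
    rw [map_sub, map_sum, ← hc]
    simp [f]
  obtain ⟨v, hv⟩ := (cls_eq_zero C k _).mp h0
  refine ⟨c, v, ?_⟩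
  rw [hv]
  simp

/-- the count of dimensions -/
theorem count {n : ℕ} (C : GradedFreeComplex n) (k : ℤ) {T : Type} [Fintype T] (deg : T → ℤ)
    (h : T → C.cyclesSpec 0 k)
    (hd : ∀ t, (h t : Fin (C.r (k + 1)) → ℚ) ∈ C.piece0 (k + 1) (deg t))
    (hli : LinearIndependent ℚ (fun t => cls C k (h t))) (j : ℤ) :
    ∑ t, dimA n (j - deg t) ≤ ∑ᶠ e : ℤ, Module.finrank ℚ (C.H0piece k e) * dimA n (j - e) := by
  classical
  have := finite_HmlSpec C k
  let E : Finset ℤ := Finset.univ.image (C.g (k + 1)) ∪ Finset.univ.image deg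
  have hmem : ∀ t, cls C k (h t) ∈ C.H0piece k (deg t) := fun t =>
    Submodule.mem_map.mpr ⟨h t, hd t, rfl⟩
  rw [finsum_eq_sum_of_support_subset (s := E)]
  · rw [← Finset.sum_fiberwise_of_maps_to (s := Finset.univ) (t := E) (g := deg)
      (fun t _ => Finset.mem_union_right _ (Finset.mem_image_of_mem _ (Finset.mem_univ t)))]
    refine Finset.sum_le_sum fun e _ => ?_
    rw [Finset.sum_congr rfl (g := fun _ => dimA n (j - e))
      (fun t ht => by rw [(Finset.mem_filter.mp ht).2]), Finset.sum_const, smul_eq_mul]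
    refine Nat.mul_le_mul_right _ ?_
    let f : {t // deg t = e} → C.H0piece k e := fun t => ⟨cls C k (h t.1), by
      have := hmem t.1
      rwa [t.2] at this⟩
    have hf : LinearIndependent ℚ f := by
      apply LinearIndependent.of_comp (C.H0piece k e).subtype
      exact hli.comp (fun t : {t // deg t = e} => t.1) Subtype.val_injective
    have := hf.fintype_card_le_finrank
    rwa [Fintype.card_subtype] at this
  · intro e he
    by_contra hE
    apply he
    have hb : C.H0piece k e = ⊥ := by
      rw [eq_bot_iff]
      rintro _ ⟨x, hx, rfl⟩
      have hx0 : x = 0 := by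
        apply Subtype.ext
        ext i
        refine (mem_piece0 C (k + 1) e x).mp hx i ?_
        rintro rfl
        exact hE (by simp [E])
      rw [hx0]; exact map_zero (cls C k)
    simp [hb]

end FreeAux
namespace FreeAux

open GradedFreeComplex

theorem pi_fin {n : ℕ} {T : Type} [Fintype T] (p : T → Submodule ℚ (Ay n))
    (hp : ∀ t, Module.Finite ℚ (p t)) :
    Module.Finite ℚ (Submodule.pi Set.univ p) ∧
      Module.finrank ℚ (Submodule.pi Set.univ p) ≤ ∑ t, Module.finrank ℚ (p t) := by
  let L : (∀ t, p t) →ₗ[ℚ] (T → Ay n) :=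
    LinearMap.pi fun t => (p t).subtype ∘ₗ LinearMap.proj t
  have hL : Submodule.pi Set.univ p = LinearMap.range L := by
    ext x
    rw [Submodule.mem_pi, LinearMap.mem_range]
    constructor
    · intro h
      exact ⟨fun t => ⟨x t, h t (Set.mem_univ t)⟩, rfl⟩
    · rintro ⟨y, rfl⟩ t _
      exact (y t).2
  rw [hL]
  refine ⟨inferInstance, (LinearMap.finrank_range_le L).trans ?_⟩
  rw [Module.finrank_pi_fintype]

theorem basis0 {n : ℕ} (C : GradedFreeComplex n) (k : ℤ)
    {S T P : Type} [Fintype S] [Fintype T] [Fintype P]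
    (σ : S → Fin (C.r k)) (h : T → C.cyclesSpec 0 k) (u : P → Fin (C.r (k + 1)))
    (hS : LinearIndependent ℚ (fun s i => C.Dspec 0 k i (σ s) : S → Fin (C.r (k + 1)) → ℚ))
    (hS' : ∀ x, ∃ c : S → ℚ, ∀ i, ∑ s, c s * C.Dspec 0 k i (σ s) = (C.Dspec 0 k).mulVec x i)
    (hT : LinearIndependent ℚ (fun t => cls C k (h t)))
    (hT' : ∀ x : C.cyclesSpec 0 k, ∃ (c : T → ℚ) (v : Fin (C.r k) → ℚ),
        (C.Dspec 0 k).mulVec v + ∑ t, c t • (h t : Fin (C.r (k + 1)) → ℚ) = x)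
    (hP : LinearIndependent ℚ (fun p i => C.Dspec 0 (k + 1) i (u p) :
      P → Fin (C.r (k + 1 + 1)) → ℚ))
    (hP' : ∀ x, ∃ c : P → ℚ, ∀ i, ∑ p, c p * C.Dspec 0 (k + 1) i (u p) =
      (C.Dspec 0 (k + 1)).mulVec x i) :
    LinearIndependent ℚ (Sum.elim (fun s i => C.Dspec 0 k i (σ s))
      (Sum.elim (fun t => (h t : Fin (C.r (k + 1)) → ℚ))
        (fun p => Pi.single (u p) 1)) : S ⊕ T ⊕ P → Fin (C.r (k + 1)) → ℚ) ∧
    ∀ x : Fin (C.r (k + 1)) → ℚ, ∃ c : S ⊕ T ⊕ P → ℚ,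
      ∑ l, c l • (Sum.elim (fun s i => C.Dspec 0 k i (σ s))
      (Sum.elim (fun t => (h t : Fin (C.r (k + 1)) → ℚ))
        (fun p => Pi.single (u p) 1)) : S ⊕ T ⊕ P → Fin (C.r (k + 1)) → ℚ) l = x := by
  classical
  have hsum : ∀ c : P → ℚ, (C.Dspec 0 (k + 1)).mulVec (∑ p, c p • Pi.single (u p) 1) =
      ∑ p, c p • (fun i => C.Dspec 0 (k + 1) i (u p)) := by
    intro c
    rw [Matrix.mulVec_sum]
    refine Finset.sum_congr rfl fun p _ => ?_
    rw [Matrix.mulVec_smul, Matrix.mulVec_single_one]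
    rfl
  have hsumS : ∀ c : S → ℚ, (C.Dspec 0 k).mulVec (∑ p, c p • Pi.single (σ p) 1) =
      ∑ p, c p • (fun i => C.Dspec 0 k i (σ p)) := by
    intro c
    rw [Matrix.mulVec_sum]
    refine Finset.sum_congr rfl fun p _ => ?_
    rw [Matrix.mulVec_smul, Matrix.mulVec_single_one]
    rfl
  have hdd : ∀ v, (C.Dspec 0 (k + 1)).mulVec ((C.Dspec 0 k).mulVec v) = 0 := by
    intro v
    rw [Matrix.mulVec_mulVec, Dspec_dd, Matrix.zero_mulVec]
  have hcyc : ∀ c : T → ℚ, (C.Dspec 0 (k + 1)).mulVec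
      (∑ t, c t • (h t : Fin (C.r (k + 1)) → ℚ)) = 0 := by
    intro c
    have h1 : ((∑ t, c t • h t : C.cyclesSpec 0 k) : Fin (C.r (k + 1)) → ℚ) =
      ∑ t, c t • (h t : Fin (C.r (k + 1)) → ℚ) := by simp
    rw [← h1]
    exact (∑ t, c t • h t : C.cyclesSpec 0 k).2
  constructor
  · rw [Fintype.linearIndependent_iff]
    intro a ha
    simp only [Fintype.sum_sum_type, Sum.elim_inl, Sum.elim_inr] at ha
    have hp : ∀ p, a (Sum.inr (Sum.inr p)) = 0 := by
      have h1 := congrArg (C.Dspec 0 (k + 1)).mulVec ha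
      rw [Matrix.mulVec_add, Matrix.mulVec_add, hcyc, hsum, ← hsumS, hdd, Matrix.mulVec_zero,
        zero_add, zero_add] at h1
      exact Fintype.linearIndependent_iff.mp hP _ h1
    simp only [hp, zero_smul, Finset.sum_const_zero, add_zero] at ha
    have ht : ∀ t, a (Sum.inr (Sum.inl t)) = 0 := by
      refine Fintype.linearIndependent_iff.mp hT (fun t => a (Sum.inr (Sum.inl t))) ?_
      have h2 : ∑ t, a (Sum.inr (Sum.inl t)) • cls C k (h t) =
          cls C k (∑ t, a (Sum.inr (Sum.inl t)) • h t) := by simp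
      rw [h2, cls_eq_zero]
      refine ⟨-∑ s, a (Sum.inl s) • Pi.single (σ s) 1, ?_⟩
      rw [Matrix.mulVec_neg, hsumS, neg_eq_iff_add_eq_zero, ← ha]
      simp
    simp only [ht, zero_smul, Finset.sum_const_zero, add_zero] at ha
    have hs := Fintype.linearIndependent_iff.mp hS _ ha
    rintro (s | t | p)
    · exact hs s
    · exact ht t
    · exact hp p
  · intro x
    obtain ⟨c, hc⟩ := hP' x
    have hz : (C.Dspec 0 (k + 1)).mulVec (x - ∑ p, c p • Pi.single (u p) 1) = 0 := by
      rw [Matrix.mulVec_sub, hsum, sub_eq_zero]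
      ext i
      rw [← hc]
      simp
    obtain ⟨c2, v, hv⟩ := hT' ⟨_, hz⟩
    obtain ⟨c3, hc3⟩ := hS' v
    have hc3' : ∑ s, c3 s • (fun i => C.Dspec 0 k i (σ s)) = (C.Dspec 0 k).mulVec v := by
      ext i
      rw [← hc3]
      simp
    refine ⟨Sum.elim c3 (Sum.elim c2 c), ?_⟩
    simp only [Fintype.sum_sum_type, Sum.elim_inl, Sum.elim_inr]
    rw [hc3', ← add_assoc, hv]
    simp

theorem main (n : ℕ) (C : GradedFreeComplex n)
    (hyp : ∀ k j : ℤ, Module.finrank ℚ (C.Hpiece k j) =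
      ∑ᶠ e : ℤ, Module.finrank ℚ (C.H0piece k e) * dimA n (j - e)) (k : ℤ) :
    Module.Free (Ay n) (C.Hml k) := by
  classical
  obtain ⟨S, _, σ, hS, hS'⟩ := colsel (C.Dspec 0 k)
  obtain ⟨P, _, u, hP, hP'⟩ := colsel (C.Dspec 0 (k + 1))
  obtain ⟨T, _, degT, h, hdeg, hT, hT'⟩ := exists_T C k
  obtain ⟨hli0, hsp0⟩ := basis0 C k σ h u hS hS' hT hT' hP hP'
  let w : S ⊕ T ⊕ P → Fin (C.r (k + 1)) → Ay n :=
    Sum.elim (fun s i => C.D k i (σ s)) (Sum.elim (fun t i => MvPolynomial.C ((h t).1 i))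
      (fun p => Pi.single (u p) 1))
  let deg : S ⊕ T ⊕ P → ℤ := Sum.elim (fun s => C.g k (σ s)) (Sum.elim degT
    (fun p => C.g (k + 1) (u p)))
  have hw0 : (fun l i => eval (0 : Fin n → ℚ) (w l i)) = (Sum.elim (fun s i => C.Dspec 0 k i (σ s))
      (Sum.elim (fun t => (h t : Fin (C.r (k + 1)) → ℚ))
        (fun p => Pi.single (u p) 1)) : S ⊕ T ⊕ P → Fin (C.r (k + 1)) → ℚ) := by
    ext l i
    rcases l with s | t | p
    · rfl
    · simp [w]
    · simp only [w, Sum.elim_inr, Pi.single_apply]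
      split_ifs <;> simp
  have hw : ∀ l i, w l i ∈ pieceA n (deg l - C.g (k + 1) i) := by
    rintro (s | t | p) i
    · exact D_mem C k i (σ s)
    · simp only [w, deg, Sum.elim_inr, Sum.elim_inl]
      by_cases hi : C.g (k + 1) i = degT t
      · exact C_mem_pieceA (by omega) _
      · rw [(mem_piece0 C (k + 1) _ _).mp (hdeg t) i hi, map_zero]; exact Submodule.zero_mem _
    · simp only [w, deg, Sum.elim_inr, Pi.single_apply]
      split_ifs with hi
      · subst hi
        have := C_mem_pieceA (n := n) (m := C.g (k + 1) (u p) - C.g (k + 1) (u p)) (by omega) 1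
        simpa using this
      · exact Submodule.zero_mem _
  have hli : LinearIndependent (Ay n) w := linInd w (by rw [hw0]; exact hli0)
  obtain hnak := nak (C.g (k + 1)) deg w hw (by
    intro x
    obtain ⟨c, hc⟩ := hsp0 x
    refine ⟨c, fun i => ?_⟩
    rw [← hw0] at hc
    have := congrFun hc i
    simpa using this)
  choose a ha1 ha2 using hnak
  have ha3 : ∀ i, ∑ l, a i l • w l = Pi.single i 1 := by
    intro i
    ext1 i'
    rw [Finset.sum_apply, Pi.single_apply, ← ha2 i i']
    rfl
  have hexp : ∀ x : Fin (C.r (k + 1)) → Ay n, x = ∑ l, (∑ i, x i * a i l) • w l := by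
    intro x
    conv_lhs => rw [pi_eq_sum_univ' x]
    simp only [Finset.sum_smul]
    rw [Finset.sum_comm]
    refine Finset.sum_congr rfl fun i _ => ?_
    simp only [mul_smul]
    rw [← Finset.smul_sum, ha3]
  let bas : Module.Basis (S ⊕ T ⊕ P) (Ay n) (Fin (C.r (k + 1)) → Ay n) :=
    Module.Basis.mk hli (by
      intro x _
      rw [hexp x]
      exact Submodule.sum_mem _ fun l _ => Submodule.smul_mem _ _ (Submodule.subset_span ⟨l, rfl⟩))
  have hbas : ∀ l, bas l = w l := fun l => by simp [bas]
  have hrepr : ∀ x l, bas.repr x l = ∑ i, x i * a i l := by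
    intro x l
    conv_lhs => rw [hexp x]
    simp only [← hbas]
    rw [bas.repr_sum_self]
  let π : (Fin (C.r (k + 1)) → Ay n) →ₗ[Ay n] (T → Ay n) :=
    LinearMap.pi fun t => bas.coord (Sum.inr (Sum.inl t))
  have hπ : ∀ x t, π x t = bas.repr x (Sum.inr (Sum.inl t)) := fun x t => rfl
  let πZ : C.cycles k →ₗ[Ay n] (T → Ay n) := π ∘ₗ (C.cycles k).subtype
  -- columns
  have hDD : ∀ v, (C.D (k + 1)).mulVec ((C.D k).mulVec v) = 0 := by
    intro v
    rw [Matrix.mulVec_mulVec, C.dd, Matrix.zero_mulVec]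
  have hcol : ∀ i, (C.D k).mulVec (Pi.single i 1) = fun i' => C.D k i' i := by
    intro i
    rw [Matrix.mulVec_single_one]; rfl
  have hcol' : ∀ i, (C.D (k + 1)).mulVec (Pi.single i 1) = fun i' => C.D (k + 1) i' i := by
    intro i
    rw [Matrix.mulVec_single_one]; rfl
  have hliP : LinearIndependent (Ay n) (fun p i => C.D (k + 1) i (u p) :
      P → Fin (C.r (k + 1 + 1)) → Ay n) := linInd _ hP
  have step1 : ∀ x : C.cycles k, πZ x = 0 → x ∈ C.boundaries k := by
    intro x hx
    have hxe := bas.sum_repr (x : Fin (C.r (k + 1)) → Ay n)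
    have ht : ∀ t, bas.repr (x : Fin (C.r (k + 1)) → Ay n) (Sum.inr (Sum.inl t)) = 0 :=
      fun t => congrFun hx t
    simp only [Fintype.sum_sum_type, hbas, ht, zero_smul, Finset.sum_const_zero, zero_add] at hxe
    have hs : ∑ s, bas.repr (x : Fin (C.r (k + 1)) → Ay n) (Sum.inl s) • w (Sum.inl s) =
        (C.D k).mulVec (∑ s, bas.repr (x : Fin (C.r (k + 1)) → Ay n) (Sum.inl s) •
          Pi.single (σ s) 1) := by
      rw [Matrix.mulVec_sum]
      refine Finset.sum_congr rfl fun s _ => ?_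
      rw [Matrix.mulVec_smul, hcol]
      rfl
    have hxz : (C.D (k + 1)).mulVec (x : Fin (C.r (k + 1)) → Ay n) = 0 := x.2
    have hp : ∀ p, bas.repr (x : Fin (C.r (k + 1)) → Ay n) (Sum.inr (Sum.inr p)) = 0 := by
      refine Fintype.linearIndependent_iff.mp hliP
        (fun p => bas.repr (x : Fin (C.r (k + 1)) → Ay n) (Sum.inr (Sum.inr p))) ?_
      rw [← hxz]
      conv_rhs => rw [← hxe]
      rw [Matrix.mulVec_add, hs, hDD, zero_add, Matrix.mulVec_sum]
      refine Finset.sum_congr rfl fun p _ => ?_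
      rw [Matrix.mulVec_smul]
      congr 1
      exact (hcol' (u p)).symm
    simp only [hp, zero_smul, Finset.sum_const_zero, add_zero] at hxe
    rw [hs] at hxe
    exact ⟨_, hxe⟩
  let q : C.cycles k →ₗ[ℚ] C.Hml k := (C.boundaries k).mkQ.restrictScalars ℚ
  have hq : ∀ x, q x = 0 ↔ x ∈ C.boundaries k := fun x =>
    Submodule.Quotient.mk_eq_zero (C.boundaries k)
  let Fj : ℤ → Submodule ℚ (T → Ay n) := fun j =>
    Submodule.pi Set.univ fun t => pieceA n (j - degT t)
  let Pj : ℤ → Submodule ℚ (C.cycles k) := fun j =>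
    (C.piece (k + 1) j).comap ((C.cycles k).subtype.restrictScalars ℚ)
  have key : ∀ j, (Pj j).map (πZ.restrictScalars ℚ) = Fj j ∧ ∀ x ∈ Pj j, q x = 0 →
      πZ.restrictScalars ℚ x = 0 := by
    intro j
    have fF := pi_fin (fun t => pieceA n (j - degT t)) (fun t => finite_pieceA _ _)
    have fC := (pi_fin (fun i => pieceA n (j - C.g (k + 1) i)) (fun t => finite_pieceA _ _)).1
    have : Module.Finite ℚ (Fj j) := fF.1
    have : Module.Finite ℚ (C.piece (k + 1) j) := fC
    have : Module.Finite ℚ (Pj j) := by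
      let f : Pj j →ₗ[ℚ] C.piece (k + 1) j :=
        ((C.cycles k).subtype.restrictScalars ℚ).restrict (p := Pj j) (q := C.piece (k + 1) j)
          (fun x hx => hx)
      refine Module.Finite.of_injective f ?_
      intro x y hxy
      apply Subtype.ext
      apply Subtype.ext
      have h2 : (f x).1 = (f y).1 := congrArg Subtype.val hxy
      exact h2
    refine compare (Pj j) q (πZ.restrictScalars ℚ) (Fj j) ?_ ?_ ?_
    · intro x _ hx
      exact (hq x).mpr (step1 x hx)
    · rintro _ ⟨x, hx, rfl⟩
      rw [Submodule.mem_pi]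
      intro t _
      change π x.1 t ∈ _
      rw [hπ, hrepr]
      refine Submodule.sum_mem _ fun i _ => ?_
      exact pieceA_mul (Submodule.mem_pi.mp hx i (Set.mem_univ i)) (ha1 i _) (by simp [deg])
    · refine fF.2.trans ?_
      have := count C k degT h hdeg hT j
      rw [← hyp k j] at this
      exact this
  have hsurj : Function.Surjective πZ := by
    rw [← LinearMap.range_eq_top, eq_top_iff]
    intro y _
    have hsingle : ∀ t, (Pi.single t 1 : T → Ay n) ∈ LinearMap.range πZ := by
      intro t
      have h1 : (Pi.single t 1 : T → Ay n) ∈ Fj (degT t) := by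
        rw [Submodule.mem_pi]
        intro t' _
        rw [Pi.single_apply]
        split_ifs with ht
        · subst ht
          have := C_mem_pieceA (n := n) (m := degT t' - degT t') (by omega) 1
          simpa using this
        · exact Submodule.zero_mem _
      rw [← (key _).1] at h1
      obtain ⟨x, _, hx⟩ := h1
      exact ⟨x, hx⟩
    have hy : y = ∑ t, y t • (Pi.single t 1 : T → Ay n) := by
      ext1 t
      simp [Finset.sum_apply, Pi.single_apply]
    rw [hy]
    exact Submodule.sum_mem _ fun t _ => Submodule.smul_mem _ _ (hsingle t)
  have hker : C.boundaries k = LinearMap.ker πZ := by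
    apply le_antisymm
    · rintro x ⟨v, hv⟩
      have hz : ∀ i, (C.D k).mulVec (Pi.single i 1) ∈ C.cycles k := fun i => hDD _
      have h0 : ∀ i, π ((C.D k).mulVec (Pi.single i 1)) = 0 := by
        intro i
        refine (key (C.g k i)).2 ⟨_, hz i⟩ ?_ ?_
        · change (C.D k).mulVec (Pi.single i 1) ∈ C.piece (k + 1) (C.g k i)
          rw [hcol]
          exact Submodule.mem_pi.mpr fun i' _ => D_mem C k i' i
        · rw [hq]
          exact ⟨Pi.single i 1, rfl⟩
      change π x.1 = 0
      have hv' : (C.D k).mulVec v = x.1 := hv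
      have hvs : v = ∑ i, v i • (Pi.single i 1 : Fin (C.r k) → Ay n) := by
        ext1 t
        simp [Finset.sum_apply, Pi.single_apply]
      rw [← hv', hvs, Matrix.mulVec_sum, map_sum]
      refine Finset.sum_eq_zero fun i _ => ?_
      rw [Matrix.mulVec_smul, map_smul, h0, smul_zero]
    · intro x hx
      exact step1 x hx
  let e1 : (C.cycles k ⧸ C.boundaries k) ≃ₗ[Ay n] (T → Ay n) :=
    (Submodule.quotEquivOfEq _ _ hker).trans (πZ.quotKerEquivOfSurjective hsurj)
  exact Module.Free.of_equiv (M := T → Ay n) (M' := C.cycles k ⧸ C.boundaries k) e1.symm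

end FreeAux

/-- Let `C` be a finite complex of finitely generated free graded modules over
`A = ℚ[y₁,…,y_n]`.  If `H^*(C) ≅ H^*(C₀) ⊗ A` as graded vector spaces — i.e. the
dimensions of the graded pieces of the homology of `C` agree with those of
`H^*(C₀) ⊗ A` — then `H^*(C)` is a free `A`-module. -/
theorem free_of_graded_iso_tensor (n : ℕ) (C : GradedFreeComplex n)
    (hyp : ∀ k j : ℤ, Module.finrank ℚ (C.Hpiece k j) =
      ∑ᶠ e : ℤ, Module.finrank ℚ (C.H0piece k e) * dimA n (j - e)) :
    ∀ k : ℤ, Module.Free (Ay n) (C.Hml k) := by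
  exact fun k => FreeAux.main n C hyp k
end

section
/- Let $A = \mathbb{Q}[y_1,\ldots,y_n]$ and let $C$ be a finite complex of finitely generated free graded $A$-modules. For $\nu \in \mathbb{Q}^n$ let $C_\nu = C \otimes_A \mathbb{Q}_\nu$ be the specialization at $\nu$. If $H^*(C_0) \cong H^*(C_\nu)$ as graded vector spaces for all generic $\nu$ (i.e., all $\nu$ with $\nu_i \neq \nu_j$ for $i \neq j$), then $H^*(C)$ is a free $A$-module. -/
set_option synthInstance.maxHeartbeats 1000000
set_option maxHeartbeats 1000000

open MvPolynomial

/-! ### Linear algebra over a field -/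

lemma aux_exists_rows {K m l : Type} [Field K] [Fintype m] [Fintype l] (Y : Matrix m l K)
    (p : ℕ) (hp : Y.rank = p) : ∃ a : Fin p → m, LinearIndependent K (fun i => Y (a i)) := by
  classical
  obtain ⟨κ, a, ha, hspan, hli⟩ := exists_linearIndependent' K Y.row
  have : Finite κ := Finite.of_injective a ha
  have : Fintype κ := Fintype.ofFinite κ
  have hc : Fintype.card κ = p := by
    rw [← hp, Matrix.rank_eq_finrank_span_row, ← hspan, finrank_span_eq_card hli]
  let e := Fintype.equivFinOfCardEq hc
  exact ⟨a ∘ e.symm, hli.comp _ e.symm.injective⟩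

lemma aux_exists_minor {K m l : Type} [Field K] [Fintype m] [Fintype l] (Y : Matrix m l K)
    (p : ℕ) (hp : Y.rank = p) :
    ∃ (a : Fin p → m) (b : Fin p → l), (Y.submatrix a b).det ≠ 0 := by
  classical
  obtain ⟨a, ha⟩ := aux_exists_rows Y p hp
  have h1 : (Y.submatrix a id).rank = p := by
    have := LinearIndependent.rank_matrix (M := Y.submatrix a id) ha
    simpa using this
  obtain ⟨b, hb⟩ := aux_exists_rows (Y.submatrix a id).transpose p
    (by rw [Matrix.rank_transpose, h1])
  refine ⟨a, b, ?_⟩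
  have h2 : IsUnit (Y.submatrix a b).transpose :=
    Matrix.linearIndependent_rows_iff_isUnit.1 hb
  rw [Matrix.isUnit_transpose, Matrix.isUnit_iff_isUnit_det] at h2
  exact h2.ne_zero

lemma aux_le_rank {K m l : Type} [Field K] [Fintype m] [Fintype l] (Y : Matrix m l K)
    (p : ℕ) (a : Fin p → m) (b : Fin p → l) (h : (Y.submatrix a b).det ≠ 0) : p ≤ Y.rank := by
  have h1 := Matrix.rank_of_det_ne_zero h
  have h2 := Matrix.rank_submatrix_le Y a b
  rw [h1] at h2
  simpa using h2

lemma aux_field_formula {K m l : Type} [Field K] [Fintype m] [Fintype l] (Y : Matrix m l K)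
    (p : ℕ) (a : Fin p → m) (b : Fin p → l) (N : Matrix (Fin p) (Fin p) K)
    (hN : N * Y.submatrix a b = 1) (hr : Y.rank ≤ p) :
    Y = Y.submatrix id b * N * Y.submatrix a id := by
  classical
  have hdet : (Y.submatrix a b).det ≠ 0 := by
    intro h
    have := congrArg Matrix.det hN
    simp [h] at this
  have hle : LinearMap.range (Y.submatrix id b).mulVecLin ≤ LinearMap.range Y.mulVecLin := by
    rw [Matrix.range_mulVecLin, Matrix.range_mulVecLin]
    apply Submodule.span_mono
    rintro _ ⟨x, rfl⟩
    exact ⟨b x, rfl⟩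
  have heq : LinearMap.range (Y.submatrix id b).mulVecLin = LinearMap.range Y.mulVecLin := by
    apply Submodule.eq_of_le_of_finrank_le hle
    exact hr.trans (aux_le_rank (Y.submatrix id b) p a id hdet)
  have hx : ∀ j : l, ∃ x : Fin p → K, (Y.submatrix id b).mulVec x = fun i => Y i j := by
    intro j
    have : Y.mulVecLin (Pi.single j 1) ∈ LinearMap.range Y.mulVecLin := ⟨_, rfl⟩
    rw [← heq] at this
    obtain ⟨x, hx⟩ := this
    refine ⟨x, ?_⟩
    rw [Matrix.mulVecLin_apply, Matrix.mulVecLin_apply, Matrix.mulVec_single_one] at hx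
    exact hx
  choose x hx using hx
  let Z : Matrix (Fin p) l K := Matrix.of fun c j => x j c
  have h1 : Y = Y.submatrix id b * Z := by
    ext i j
    exact (congrFun (hx j) i).symm
  have h2 : Y.submatrix a id = Y.submatrix a b * Z := by
    ext i j
    exact congrFun (congrFun h1 (a i)) j
  rw [h2, Matrix.mul_assoc, ← Matrix.mul_assoc N, hN, Matrix.one_mul]
  exact h1

/-! ### Homogeneous matrices -/

/-- Homogeneous matrix with respect to given degrees of rows and columns. -/
def GrM {n : ℕ} {m l : Type} (X : Matrix m l (Ay n)) (gm : m → ℤ) (gl : l → ℤ) : Prop :=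
  ∀ i j, (X i j).IsHomogeneous (gl j - gm i).toNat ∧ (gl j < gm i → X i j = 0)

lemma aux_det_hom {n p : ℕ} (X : Matrix (Fin p) (Fin p) (Ay n)) (gm gl : Fin p → ℤ)
    (h : GrM X gm gl) : X.det.IsHomogeneous (∑ i, gl i - ∑ i, gm i).toNat := by
  rw [Matrix.det_apply]
  apply IsHomogeneous.sum
  intro σ _
  have key : (∏ i, X (σ i) i).IsHomogeneous (∑ i, gl i - ∑ i, gm i).toNat := by
    by_cases hz : ∃ i, gl i < gm (σ i)
    · obtain ⟨i, hi⟩ := hz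
      have hp0 : (∏ i, X (σ i) i) = 0 := Finset.prod_eq_zero (Finset.mem_univ i) ((h (σ i) i).2 hi)
      rw [hp0]
      exact isHomogeneous_zero _ _ _
    · push Not at hz
      have h1 := IsHomogeneous.prod Finset.univ (fun i => X (σ i) i)
        (fun i => (gl i - gm (σ i)).toNat) (fun i _ => (h (σ i) i).1)
      convert h1 using 1
      have h2 : ∑ i, gm i = ∑ i, gm (σ i) := (Equiv.sum_comp σ gm).symm
      have h3 : ((∑ i, (gl i - gm (σ i)).toNat : ℕ) : ℤ) = ∑ i, gl i - ∑ i, gm i := by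
        rw [h2, ← Finset.sum_sub_distrib]
        push_cast
        apply Finset.sum_congr rfl
        intro i _
        have := hz i
        omega
      omega
  rcases Int.units_eq_one_or (Equiv.Perm.sign σ) with hs | hs
  · simpa [hs] using key
  · simpa [hs] using key.neg

lemma aux_hom_unit {n d : ℕ} (q : Ay n) (hq : q.IsHomogeneous d) (h0 : eval 0 q ≠ 0) :
    IsUnit q := by
  have hc : coeff 0 q ≠ 0 := by
    rwa [← constantCoeff_eq, ← eval_zero]
  have hd : d = 0 := by
    by_contra hd
    exact hc (hq.coeff_eq_zero (by simpa using fun h => hd h.symm))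
  subst hd
  rw [← totalDegree_zero_iff_isHomogeneous, totalDegree_eq_zero_iff_eq_C] at hq
  rw [hq]
  exact (IsUnit.mk0 _ hc).map C

lemma aux_minor_unit {n : ℕ} {m l : Type} [Fintype m] [Fintype l]
    (X : Matrix m l (Ay n)) (gm : m → ℤ) (gl : l → ℤ) (h : GrM X gm gl)
    (p : ℕ) (hp : (X.map (eval 0)).rank = p) :
    ∃ (a : Fin p → m) (b : Fin p → l), IsUnit (X.submatrix a b).det := by
  obtain ⟨a, b, hab⟩ := aux_exists_minor _ p hp
  refine ⟨a, b, aux_hom_unit _ (aux_det_hom (X.submatrix a b) (gm ∘ a) (gl ∘ b)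
    fun i j => h (a i) (b j)) ?_⟩
  rw [RingHom.map_det]
  exact hab

lemma aux_rank_le {n : ℕ} {m l : Type} [Fintype m] [Fintype l]
    (X : Matrix m l (Ay n)) (gm : m → ℤ) (gl : l → ℤ) (h : GrM X gm gl) (ν : Fin n → ℚ) :
    (X.map (eval 0)).rank ≤ (X.map (eval ν)).rank := by
  obtain ⟨a, b, hab⟩ := aux_minor_unit X gm gl h _ rfl
  apply aux_le_rank _ _ a b
  have := (hab.map (eval ν)).ne_zero
  rw [RingHom.map_det] at this
  exact this

/-- Pairwise distinct coordinates. -/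
def Gen {n : ℕ} (ν : Fin n → ℚ) : Prop := ∀ i j : Fin n, i ≠ j → ν i ≠ ν j

lemma aux_zariski {n : ℕ} (q : Ay n) (h : ∀ ν : Fin n → ℚ, Gen ν → eval ν q = 0) : q = 0 := by
  classical
  let V : Ay n := ∏ i, ∏ j, if i = j then 1 else (X i - X j)
  have hV : V ≠ 0 := by
    refine Finset.prod_ne_zero_iff.2 fun i _ => Finset.prod_ne_zero_iff.2 fun j _ => ?_
    split_ifs with hij
    · exact one_ne_zero
    · rw [sub_ne_zero]
      exact fun hX => hij (X_injective hX)
  have hz : q * V = 0 := by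
    apply MvPolynomial.funext
    intro ν
    rw [map_mul, map_zero]
    by_cases hν : Gen ν
    · rw [h ν hν, zero_mul]
    · unfold Gen at hν
      push Not at hν
      obtain ⟨i, j, hij, he⟩ := hν
      have : eval ν V = 0 := by
        simp only [V, map_prod]
        refine Finset.prod_eq_zero (Finset.mem_univ i) (Finset.prod_eq_zero (Finset.mem_univ j) ?_)
        simp [hij, he]
      rw [this, mul_zero]
  exact (mul_eq_zero.1 hz).resolve_right hV

lemma aux_formula {n : ℕ} {m l : Type} [Fintype m] [Fintype l]
    (X : Matrix m l (Ay n)) (gm : m → ℤ) (gl : l → ℤ) (h : GrM X gm gl)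
    (hr : ∀ ν, Gen ν → (X.map (eval ν)).rank ≤ (X.map (eval 0)).rank) :
    ∃ (p : ℕ) (a : Fin p → m) (b : Fin p → l) (N : Matrix (Fin p) (Fin p) (Ay n)),
      N * X.submatrix a b = 1 ∧ X.submatrix a b * N = 1 ∧
      X = X.submatrix id b * N * X.submatrix a id := by
  obtain ⟨a, b, hab⟩ := aux_minor_unit X gm gl h _ rfl
  refine ⟨_, a, b, (X.submatrix a b)⁻¹, Matrix.nonsing_inv_mul _ hab,
    Matrix.mul_nonsing_inv _ hab, ?_⟩
  have hN := Matrix.nonsing_inv_mul _ hab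
  generalize (X.submatrix a b)⁻¹ = N at hN
  have key : ∀ ν, Gen ν → X.map (eval ν) =
      (X.submatrix id b * N * X.submatrix a id).map (eval ν) := by
    intro ν hν
    rw [Matrix.map_mul, Matrix.map_mul]
    refine aux_field_formula (X.map (eval ν)) _ a b (N.map (eval ν)) ?_ (hr ν hν)
    have := congrArg (fun Z => Z.map (eval ν)) hN
    simp only [Matrix.map_mul] at this
    rw [Matrix.map_one _ (map_zero _) (map_one _)] at this
    exact this
  ext1 i j
  rw [← sub_eq_zero]
  apply aux_zariski
  intro ν hν
  rw [map_sub, sub_eq_zero]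
  exact congrFun (congrFun (key ν hν) i) j

/-- Splitting data from a unit minor. -/
lemma aux_split {R m l : Type} [CommRing R] [Fintype m] [Fintype l] [DecidableEq m] [DecidableEq l]
    (X : Matrix m l R) (p : ℕ) (a : Fin p → m) (b : Fin p → l) (N : Matrix (Fin p) (Fin p) R)
    (hN : N * X.submatrix a b = 1)
    (hX : X = X.submatrix id b * N * X.submatrix a id) :
    ∃ (c : Finset l) (S : Matrix l c R) (U : Matrix l m R),
      X * S = 0 ∧ (1 : Matrix l l R).submatrix (Subtype.val : c → l) id * S = 1 ∧
      S * (1 : Matrix l l R).submatrix (Subtype.val : c → l) id = 1 - U * X := by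
  let U : Matrix l m R := (1 : Matrix l l R).submatrix id b * N * (1 : Matrix m m R).submatrix a id
  have hXa : (1 : Matrix m m R).submatrix a id * X = X.submatrix a id := by
    ext i j
    simp [Matrix.mul_apply, Matrix.one_apply]
  have hXb : X * (1 : Matrix l l R).submatrix id b = X.submatrix id b := by
    ext i j
    simp [Matrix.mul_apply, Matrix.one_apply]
  have hUX : U * X = (1 : Matrix l l R).submatrix id b * N * X.submatrix a id := by
    simp only [U, Matrix.mul_assoc, hXa]
  have hXUX : X * (U * X) = X := by
    rw [hUX, ← Matrix.mul_assoc, ← Matrix.mul_assoc, hXb]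
    exact hX.symm
  have hUXb : (U * X).submatrix id b = (1 : Matrix l l R).submatrix id b := by
    have : (U * X).submatrix id b
        = (1 : Matrix l l R).submatrix id b * N * X.submatrix a b := by
      rw [hUX]; rfl
    rw [this, Matrix.mul_assoc, hN, Matrix.mul_one]
  let c : Finset l := (Finset.univ.image b)ᶜ
  refine ⟨c, (1 - U * X).submatrix id Subtype.val, U, ?_, ?_, ?_⟩
  · have h0 : X * (1 - U * X) = 0 := by rw [Matrix.mul_sub, Matrix.mul_one, hXUX, sub_self]
    ext i j
    exact congrFun (congrFun h0 i) j.1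
  · ext i j
    have h1 : (U * X) i.1 j.1 = 0 := by
      rw [hUX, Matrix.mul_assoc, Matrix.mul_apply]
      apply Finset.sum_eq_zero
      intro x _
      have : i.1 ≠ b x := by
        intro h
        have h2 := i.2
        simp only [c, Finset.mem_compl] at h2
        exact h2 (Finset.mem_image.2 ⟨x, Finset.mem_univ _, h.symm⟩)
      simp [Matrix.one_apply, this]
    have h2 : ((1 : Matrix l l R).submatrix (Subtype.val : c → l) id *
        (1 - U * X).submatrix id Subtype.val) i j = (1 - U * X : Matrix l l R) i.1 j.1 := by
      rw [Matrix.mul_apply, Finset.sum_eq_single i.1]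
      · change (1 : Matrix l l R) i.1 i.1 * (1 - U * X : Matrix l l R) i.1 j.1 = _
        rw [Matrix.one_apply_eq, one_mul]
      · intro x _ hx
        simp [Matrix.one_apply, hx.symm]
      · simp
    rw [h2, Matrix.sub_apply, h1, sub_zero]
    by_cases hij : i = j
    · subst hij
      rw [Matrix.one_apply_eq, Matrix.one_apply_eq]
    · rw [Matrix.one_apply_ne hij, Matrix.one_apply_ne (fun h => hij (Subtype.ext h))]
  · ext i j
    by_cases hj : j ∈ c
    · rw [Matrix.mul_apply, Finset.sum_eq_single ⟨j, hj⟩]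
      · change (1 - U * X : Matrix l l R) i j * (1 : Matrix l l R) j j = _
        rw [Matrix.one_apply_eq, mul_one]
      · rintro x _ hx
        have : x.1 ≠ j := fun h => hx (Subtype.ext h)
        simp [Matrix.one_apply, this]
      · simp
    · have hj' := hj
      simp only [c, Finset.mem_compl, Finset.mem_image, Finset.mem_univ, true_and, not_not] at hj'
      obtain ⟨x, rfl⟩ := hj'
      have h2 : (1 - U * X : Matrix l l R) i (b x) = 0 := by
        have : (U * X) i (b x) = (1 : Matrix l l R) i (b x) := congrFun (congrFun hUXb i) x
        rw [Matrix.sub_apply, this, sub_self]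
      rw [h2, Matrix.mul_apply]
      apply Finset.sum_eq_zero
      intro y _
      have : y.1 ≠ b x := fun h => hj (h ▸ y.2)
      simp [Matrix.one_apply, this]

/-- Abstract freeness criterion. -/
lemma aux_free {n : ℕ} {m l k : Type} [Fintype m] [Fintype l] [Fintype k]
    [DecidableEq m] [DecidableEq l] [DecidableEq k]
    (D : Matrix k m (Ay n)) (E : Matrix m l (Ay n)) (hDE : D * E = 0)
    (gk : k → ℤ) (gm : m → ℤ) (gl : l → ℤ) (hD : GrM D gk gm) (hE : GrM E gm gl)
    (hrD : ∀ ν, Gen ν → (D.map (eval ν)).rank ≤ (D.map (eval 0)).rank)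
    (hrE : ∀ ν, Gen ν → (E.map (eval ν)).rank ≤ (E.map (eval 0)).rank) :
    ∃ (f : Type) (_ : Fintype f) (Q : Matrix f m (Ay n)),
      Q * E = 0 ∧ (∀ z, D.mulVec z = 0 → Q.mulVec z = 0 → ∃ x, z = E.mulVec x) ∧
      ∀ w, ∃ z, D.mulVec z = 0 ∧ Q.mulVec z = w := by
  obtain ⟨p, a, b, N, hN, -, hform⟩ := aux_formula D gk gm hD hrD
  obtain ⟨c, S, U, hDS, hRS, hSR⟩ := aux_split D p a b N hN hform
  set R : Matrix c m (Ay n) := (1 : Matrix m m (Ay n)).submatrix (Subtype.val : c → m) id with hR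
  obtain ⟨E', hE'⟩ : ∃ E' : Matrix c l (Ay n), E' = R * E := ⟨_, rfl⟩
  have hE'sub : E' = E.submatrix Subtype.val id := by
    ext i j
    simp [hE', hR, Matrix.mul_apply, Matrix.one_apply]
  have hSE' : S * E' = E := by
    rw [hE', ← Matrix.mul_assoc, hSR, Matrix.sub_mul, Matrix.one_mul, Matrix.mul_assoc, hDE,
      Matrix.mul_zero, sub_zero]
  have hE'g : GrM E' (gm ∘ Subtype.val) gl := by
    rw [hE'sub]
    exact fun i j => hE i.1 j
  have hr' : ∀ ν, Gen ν → (E'.map (eval ν)).rank ≤ (E'.map (eval 0)).rank := by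
    intro ν hν
    calc (E'.map (eval ν)).rank ≤ (E.map (eval ν)).rank := by
          rw [hE'sub]
          exact Matrix.rank_submatrix_le (E.map (eval ν)) Subtype.val id
      _ ≤ (E.map (eval 0)).rank := hrE ν hν
      _ ≤ (E'.map (eval 0)).rank := by
          conv_lhs => rw [← hSE', Matrix.map_mul]
          exact Matrix.rank_mul_le_right _ _
  obtain ⟨p', a', b', N', hN', hN'', hform'⟩ := aux_formula E' _ gl hE'g hr'
  have ht := aux_split E'.transpose p' b' a' N'.transpose
    (by
      have := congrArg Matrix.transpose hN''
      rw [Matrix.transpose_mul, Matrix.transpose_one] at this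
      exact this)
    (by
      have := congrArg Matrix.transpose hform'
      rw [Matrix.transpose_mul, Matrix.transpose_mul, ← Matrix.mul_assoc] at this
      exact this)
  obtain ⟨c', S', U', h1, h2, h3⟩ := ht
  set R' : Matrix c' c (Ay n) := (1 : Matrix c c (Ay n)).submatrix Subtype.val id
  have h1' : S'.transpose * E' = 0 := by
    have := congrArg Matrix.transpose h1
    rwa [Matrix.transpose_mul, Matrix.transpose_transpose, Matrix.transpose_zero] at this
  have h2' : S'.transpose * R'.transpose = 1 := by
    rw [← Matrix.transpose_mul, h2, Matrix.transpose_one]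
  have h3' : R'.transpose * S'.transpose = 1 - E' * U'.transpose := by
    rw [← Matrix.transpose_mul, h3, Matrix.transpose_sub, Matrix.transpose_mul,
      Matrix.transpose_one, Matrix.transpose_transpose]
  refine ⟨c', inferInstance, S'.transpose * R, ?_, ?_, ?_⟩
  · rw [Matrix.mul_assoc, ← hE']; exact h1'
  · intro z hz hQ
    refine ⟨U'.transpose.mulVec (R.mulVec z), ?_⟩
    have e1 : R.mulVec z = E'.mulVec (U'.transpose.mulVec (R.mulVec z)) := by
      have := congrArg (fun Z => Z.mulVec (R.mulVec z)) h3'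
      simp only [Matrix.sub_mulVec, Matrix.one_mulVec, ← Matrix.mulVec_mulVec] at this
      rw [← Matrix.mulVec_mulVec] at hQ
      rw [hQ, Matrix.mulVec_zero] at this
      exact (sub_eq_zero.1 this.symm)
    have e2 : z = S.mulVec (R.mulVec z) := by
      rw [Matrix.mulVec_mulVec, hSR, Matrix.sub_mulVec, Matrix.one_mulVec, ← Matrix.mulVec_mulVec,
        hz, Matrix.mulVec_zero, sub_zero]
    calc z = S.mulVec (R.mulVec z) := e2
      _ = S.mulVec (E'.mulVec (U'.transpose.mulVec (R.mulVec z))) := by rw [← e1]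
      _ = _ := by rw [Matrix.mulVec_mulVec, hSE']
  · intro w
    refine ⟨S.mulVec (R'.transpose.mulVec w), ?_, ?_⟩
    · rw [Matrix.mulVec_mulVec, hDS, Matrix.zero_mulVec]
    · rw [Matrix.mulVec_mulVec, Matrix.mulVec_mulVec, Matrix.mul_assoc S'.transpose, hRS,
        Matrix.mul_one, h2', Matrix.one_mulVec]

lemma aux_finrank {n : ℕ} (C : GradedFreeComplex n) (ν : Fin n → ℚ) (k : ℤ) :
    Module.finrank ℚ (C.HmlSpec ν k) + (C.Dspec ν k).rank + (C.Dspec ν (k + 1)).rank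
      = C.r (k + 1) := by
  have hle : LinearMap.range (C.Dspec ν k).mulVecLin ≤ C.cyclesSpec ν k := by
    rintro _ ⟨x, rfl⟩
    have : C.Dspec ν (k + 1) * C.Dspec ν k = 0 := by
      unfold GradedFreeComplex.Dspec
      rw [← Matrix.map_mul, C.dd k, Matrix.map_zero _ (map_zero _)]
    simp [GradedFreeComplex.cyclesSpec, Matrix.mulVec_mulVec, this]
  have h1 := Submodule.finrank_quotient_add_finrank
    ((LinearMap.range (C.Dspec ν k).mulVecLin).comap (C.cyclesSpec ν k).subtype)
  rw [(Submodule.comapSubtypeEquivOfLe hle).finrank_eq] at h1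
  have h2 := LinearMap.finrank_range_add_finrank_ker (C.Dspec ν (k + 1)).mulVecLin
  rw [Module.finrank_fin_fun] at h2
  change Module.finrank ℚ (C.HmlSpec ν k) + (C.Dspec ν k).rank
    = Module.finrank ℚ (LinearMap.ker (C.Dspec ν (k + 1)).mulVecLin) at h1
  change (C.Dspec ν (k + 1)).rank + _ = _ at h2
  omega


/-- Let `C` be a finite complex of finitely generated free graded modules over
`A = ℚ[y₁,…,y_n]`, and for `ν ∈ ℚⁿ` let `C_ν = C ⊗_A ℚ_ν` be the specialization
of `C` at `ν`.  If `H^*(C₀) ≅ H^*(C_ν)` as graded vector spaces for every generic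
`ν` (i.e. every `ν` with pairwise distinct coordinates), then `H^*(C)` is a free
`A`-module. -/
theorem free_of_generic_specializations (n : ℕ) (C : GradedFreeComplex n)
    (hyp : ∀ ν : Fin n → ℚ, (∀ i j : Fin n, i ≠ j → ν i ≠ ν j) →
      ∀ k : ℤ, Module.finrank ℚ (C.HmlSpec 0 k) = Module.finrank ℚ (C.HmlSpec ν k)) :
    ∀ k : ℤ, Module.Free (Ay n) (C.Hml k) := by
  intro k
  have hg : ∀ k, GrM (C.D k) (C.g (k + 1)) (C.g k) :=
    fun k i j => ⟨C.hom k i j, C.hneg k i j⟩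
  have hr : ∀ ν, Gen ν → ((C.D (k + 1)).map (eval ν)).rank ≤ ((C.D (k + 1)).map (eval 0)).rank ∧
      ((C.D k).map (eval ν)).rank ≤ ((C.D k).map (eval 0)).rank := by
    intro ν hν
    have h0 := hyp ν hν k
    have h1 := aux_finrank C ν k
    have h2 := aux_finrank C 0 k
    have h3 := aux_rank_le _ _ _ (hg k) ν
    have h4 := aux_rank_le _ _ _ (hg (k + 1)) ν
    unfold GradedFreeComplex.Dspec at h1 h2
    omega
  obtain ⟨f, _, Q, hQE, hker, hsurj⟩ := aux_free (C.D (k + 1)) (C.D k) (C.dd k) _ _ _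
    (hg (k + 1)) (hg k) (fun ν hν => (hr ν hν).1) (fun ν hν => (hr ν hν).2)
  let φ : C.cycles k →ₗ[Ay n] (f → Ay n) := Q.mulVecLin.comp (C.cycles k).subtype
  have hφ : Function.Surjective φ := by
    intro w
    obtain ⟨z, hz, hw⟩ := hsurj w
    exact ⟨⟨z, hz⟩, hw⟩
  have hk : LinearMap.ker φ = C.boundaries k := by
    ext z
    constructor
    · intro h
      obtain ⟨x, hx⟩ := hker z.1 z.2 h
      exact ⟨x, hx.symm⟩
    · rintro ⟨x, hx⟩
      change Q.mulVec z.1 = 0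
      change (C.D k).mulVec x = z.1 at hx
      rw [← hx, Matrix.mulVec_mulVec, hQE, Matrix.zero_mulVec]
  have e : (C.cycles k ⧸ C.boundaries k) ≃ₗ[Ay n] (f → Ay n) :=
    (Submodule.quotEquivOfEq _ _ hk.symm).trans (φ.quotKerEquivOfSurjective hφ)
  exact Module.Free.of_equiv (e.symm : (f → Ay n) ≃ₗ[Ay n] (C.cycles k ⧸ C.boundaries k))
end

section
/- In $\mathbb{C}[x_1,\ldots,x_n,y_1,\ldots,y_n] \otimes \Lambda[\theta_1,\ldots,\theta_n]$, let $\mathcal{J}_n$ be the ideal generated by all polynomials that are antisymmetric under the diagonal $S_n$-action (permuting $x$'s, $y$'s, and $\theta$'s simultaneously). Then $\mathcal{J}_n \subseteq (x_i - x_j,\ y_i - y_j,\ \theta_i - \theta_j)$ for every pair $i \neq j$. -/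
open MvPolynomial

/-- The polynomial part `ℂ[x₁,…,x_n,y₁,…,y_n]`: `X (inl i) = xᵢ`, `X (inr i) = yᵢ`. -/
abbrev PP (n : ℕ) : Type := MvPolynomial (Fin n ⊕ Fin n) ℂ

/-- The super-polynomial ring `ℂ[x,y] ⊗ Λ[θ₁,…,θ_n]`. -/
abbrev SP (n : ℕ) : Type := TensorProduct ℂ (PP n) (ExteriorAlgebra ℂ (Fin n → ℂ))

noncomputable def xv {n : ℕ} (i : Fin n) : SP n := TensorProduct.tmul ℂ (X (Sum.inl i)) 1
noncomputable def yv {n : ℕ} (i : Fin n) : SP n := TensorProduct.tmul ℂ (X (Sum.inr i)) 1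
noncomputable def θv {n : ℕ} (i : Fin n) : SP n :=
  TensorProduct.tmul ℂ 1 (ExteriorAlgebra.ι ℂ (Pi.single i (1 : ℂ)))

/-- The diagonal action of a permutation `σ ∈ S_n` on the super-polynomial ring,
permuting the `x`'s, `y`'s and `θ`'s simultaneously. -/
noncomputable def diagAct {n : ℕ} (σ : Equiv.Perm (Fin n)) : SP n →ₐ[ℂ] SP n :=
  Algebra.TensorProduct.map
    (rename (Sum.map σ σ))
    (ExteriorAlgebra.map (LinearMap.funLeft ℂ ℂ ⇑σ⁻¹))

/-- `g` is antisymmetric for the diagonal `S_n`-action: `σ(g) = sgn(σ) g` for all `σ`. -/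
def IsAntisym {n : ℕ} (g : SP n) : Prop :=
  ∀ σ : Equiv.Perm (Fin n), diagAct σ g = ((Equiv.Perm.sign σ : ℤ) : ℂ) • g


/-- Elements `ι w` can be moved from the left to the right. -/
theorem iota_swap {n : ℕ} (w : Fin n → ℂ) (a : ExteriorAlgebra ℂ (Fin n → ℂ)) :
    ∃ b, ExteriorAlgebra.ι ℂ w * a = b * ExteriorAlgebra.ι ℂ w := by
  induction a using ExteriorAlgebra.induction with
  | algebraMap r => exact ⟨algebraMap _ _ r, (Algebra.commutes r _).symm⟩
  | ι v =>
    refine ⟨-ExteriorAlgebra.ι ℂ v, ?_⟩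
    rw [neg_mul]
    exact eq_neg_of_add_eq_zero_left (ExteriorAlgebra.ι_add_mul_swap w v)
  | mul a b ha hb =>
    obtain ⟨a', ha⟩ := ha
    obtain ⟨b', hb⟩ := hb
    exact ⟨a' * b', by rw [← mul_assoc, ha, mul_assoc, hb, mul_assoc]⟩
  | add a b ha hb =>
    obtain ⟨a', ha⟩ := ha
    obtain ⟨b', hb⟩ := hb
    exact ⟨a' + b', by rw [mul_add, ha, hb, add_mul]⟩

/-- Abbreviation for the left ideal on the right-hand side. -/
noncomputable abbrev diagIdeal {n : ℕ} (i j : Fin n) : Submodule (SP n) (SP n) :=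
  Submodule.span (SP n) {xv i - xv j, yv i - yv j, θv i - θv j}

theorem xv_sub_swap_mem {n : ℕ} (i j k : Fin n) :
    xv k - xv (Equiv.swap i j k) ∈ diagIdeal i j := by
  have h : xv i - xv j ∈ diagIdeal i j := Submodule.subset_span (by simp)
  rcases eq_or_ne k i with rfl | h1
  · simpa using h
  rcases eq_or_ne k j with rfl | h2
  · simpa using neg_mem h
  simp [Equiv.swap_apply_of_ne_of_ne h1 h2]

theorem yv_sub_swap_mem {n : ℕ} (i j k : Fin n) :
    yv k - yv (Equiv.swap i j k) ∈ diagIdeal i j := by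
  have h : yv i - yv j ∈ diagIdeal i j := Submodule.subset_span (by simp)
  rcases eq_or_ne k i with rfl | h1
  · simpa using h
  rcases eq_or_ne k j with rfl | h2
  · simpa using neg_mem h
  simp [Equiv.swap_apply_of_ne_of_ne h1 h2]

theorem X_sub_swap_mem {n : ℕ} (i j : Fin n) (k : Fin n ⊕ Fin n) :
    TensorProduct.tmul ℂ (X k - X (Sum.map (Equiv.swap i j) (Equiv.swap i j) k) : PP n)
      (1 : ExteriorAlgebra ℂ (Fin n → ℂ)) ∈ diagIdeal i j := by
  rw [TensorProduct.sub_tmul]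
  rcases k with k | k
  · exact xv_sub_swap_mem i j k
  · exact yv_sub_swap_mem i j k

theorem poly_part {n : ℕ} (i j : Fin n) (ω : ExteriorAlgebra ℂ (Fin n → ℂ)) (p : PP n) :
    TensorProduct.tmul ℂ (p - rename (Sum.map (Equiv.swap i j) (Equiv.swap i j)) p) ω
      ∈ diagIdeal i j := by
  induction p using MvPolynomial.induction_on with
  | C a => simp
  | add p q hp hq =>
    have := add_mem hp hq
    rw [← TensorProduct.add_tmul] at this
    rw [map_add, add_sub_add_comm]
    exact this
  | mul_X p k hp =>
    have h1 := Submodule.smul_mem _ (TensorProduct.tmul ℂ (X k : PP n) 1 : SP n) hp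
    have h2 := Submodule.smul_mem _ (TensorProduct.tmul ℂ
      (rename (Sum.map (Equiv.swap i j) (Equiv.swap i j)) p) ω : SP n) (X_sub_swap_mem i j k)
    have := add_mem h1 h2
    rw [smul_eq_mul, smul_eq_mul, Algebra.TensorProduct.tmul_mul_tmul,
      Algebra.TensorProduct.tmul_mul_tmul, one_mul, mul_one, ← TensorProduct.add_tmul] at this
    have e : p * X k - rename (Sum.map (Equiv.swap i j) (Equiv.swap i j)) (p * X k)
        = X k * (p - rename (Sum.map (Equiv.swap i j) (Equiv.swap i j)) p)
          + rename (Sum.map (Equiv.swap i j) (Equiv.swap i j)) p *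
            (X k - X (Sum.map (Equiv.swap i j) (Equiv.swap i j) k)) := by
      rw [map_mul, rename_X]
      ring
    rw [e]
    exact this

theorem vec_part {n : ℕ} (i j : Fin n) (hij : i ≠ j) (v : Fin n → ℂ) :
    v - LinearMap.funLeft ℂ ℂ ⇑(Equiv.swap i j)⁻¹ v
      = (v i - v j) • (Pi.single i (1 : ℂ) - Pi.single j (1 : ℂ)) := by
  ext k
  rcases eq_or_ne k i with rfl | h1
  · simp [LinearMap.funLeft_apply, hij]
  rcases eq_or_ne k j with rfl | h2
  · simp [LinearMap.funLeft_apply, h1]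
  simp [LinearMap.funLeft_apply, Equiv.swap_apply_of_ne_of_ne h1 h2, h1, h2]

theorem iota_part {n : ℕ} (i j : Fin n) (hij : i ≠ j) (v : Fin n → ℂ)
    (a : ExteriorAlgebra ℂ (Fin n → ℂ)) :
    (TensorProduct.tmul ℂ (1 : PP n) (ExteriorAlgebra.ι ℂ
      (v - LinearMap.funLeft ℂ ℂ ⇑(Equiv.swap i j)⁻¹ v) * a) : SP n) ∈ diagIdeal i j := by
  have h : θv i - θv j ∈ diagIdeal i j := Submodule.subset_span (by simp)
  obtain ⟨b, hb⟩ := iota_swap (Pi.single i (1 : ℂ) - Pi.single j (1 : ℂ)) a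
  have h2 := Submodule.smul_mem _
    (TensorProduct.tmul ℂ (1 : PP n) ((v i - v j) • b) : SP n) h
  rw [vec_part i j hij, map_smul, smul_mul_assoc, hb]
  rw [θv, θv, ← TensorProduct.tmul_sub, ← map_sub, smul_eq_mul,
    Algebra.TensorProduct.tmul_mul_tmul, one_mul, smul_mul_assoc] at h2
  exact h2

theorem ext_part {n : ℕ} (i j : Fin n) (hij : i ≠ j) (ω : ExteriorAlgebra ℂ (Fin n → ℂ)) :
    (TensorProduct.tmul ℂ (1 : PP n) (ω - ExteriorAlgebra.map
      (LinearMap.funLeft ℂ ℂ ⇑(Equiv.swap i j)⁻¹) ω) : SP n) ∈ diagIdeal i j := by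
  induction ω using CliffordAlgebra.left_induction with
  | algebraMap r =>
    rw [AlgHom.commutes, sub_self, TensorProduct.tmul_zero]
    exact zero_mem _
  | add x y hx hy =>
    have := add_mem hx hy
    rw [← TensorProduct.tmul_add] at this
    rw [map_add, add_sub_add_comm]
    exact this
  | ι_mul x m hx =>
    have h1 := Submodule.smul_mem _
      (TensorProduct.tmul ℂ (1 : PP n) (ExteriorAlgebra.ι ℂ m) : SP n) hx
    have h2 := iota_part i j hij m (ExteriorAlgebra.map
      (LinearMap.funLeft ℂ ℂ ⇑(Equiv.swap i j)⁻¹) x)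
    have := add_mem h1 h2
    rw [smul_eq_mul, Algebra.TensorProduct.tmul_mul_tmul, one_mul,
      ← TensorProduct.tmul_add] at this
    have e : ExteriorAlgebra.ι ℂ m * x - ExteriorAlgebra.map
        (LinearMap.funLeft ℂ ℂ ⇑(Equiv.swap i j)⁻¹) (ExteriorAlgebra.ι ℂ m * x)
        = ExteriorAlgebra.ι ℂ m * (x - ExteriorAlgebra.map
            (LinearMap.funLeft ℂ ℂ ⇑(Equiv.swap i j)⁻¹) x)
          + ExteriorAlgebra.ι ℂ (m - LinearMap.funLeft ℂ ℂ ⇑(Equiv.swap i j)⁻¹ m) *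
            ExteriorAlgebra.map (LinearMap.funLeft ℂ ℂ ⇑(Equiv.swap i j)⁻¹) x := by
      rw [map_mul, ExteriorAlgebra.map_apply_ι, map_sub, mul_sub, sub_mul]
      abel
    rw [← e] at this
    exact this

theorem sub_neg_one_smul {A : Type*} [Ring A] [Algebra ℂ A] (g : A) :
    g - (((-1 : ℤˣ) : ℤ) : ℂ) • g = (2 : ℂ) • g := by
  simp [two_smul]

theorem sub_diagAct_mem {n : ℕ} (i j : Fin n) (hij : i ≠ j) (g : SP n) :
    g - diagAct (Equiv.swap i j) g ∈ diagIdeal i j := by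
  induction g using TensorProduct.induction_on with
  | zero => simp
  | add x y hx hy =>
    rw [map_add, add_sub_add_comm]
    exact add_mem hx hy
  | tmul p ω =>
    have h1 := poly_part i j ω p
    have h2 := Submodule.smul_mem _ (TensorProduct.tmul ℂ
      (rename (Sum.map (Equiv.swap i j) (Equiv.swap i j)) p) 1 : SP n) (ext_part i j hij ω)
    have := add_mem h1 h2
    rw [smul_eq_mul, Algebra.TensorProduct.tmul_mul_tmul, one_mul, mul_one,
      TensorProduct.sub_tmul, TensorProduct.tmul_sub, sub_add_sub_cancel] at this
    rw [diagAct, Algebra.TensorProduct.map_tmul]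
    exact this

/-- The ideal `𝒥_n` generated by the diagonal antisymmetric elements is contained in
`(xᵢ - x_j, yᵢ - y_j, θᵢ - θ_j)` for every pair `i ≠ j`. -/
theorem antisym_ideal_le (n : ℕ) (i j : Fin n) (hij : i ≠ j) :
    Submodule.span (SP n) {g : SP n | IsAntisym g} ≤
      Submodule.span (SP n) {xv i - xv j, yv i - yv j, θv i - θv j} := by
  rw [Submodule.span_le]
  intro g hg
  have h := sub_diagAct_mem i j hij g
  rw [hg (Equiv.swap i j), Equiv.Perm.sign_swap hij] at h
  have h2 := Submodule.smul_mem _ (algebraMap ℂ (SP n) (1 / 2)) h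
  have e : algebraMap ℂ (SP n) (1 / 2) • (g - (((-1 : ℤˣ) : ℤ) : ℂ) • g) = g := by
    rw [smul_eq_mul, ← Algebra.smul_def]
    have : g - (((-1 : ℤˣ) : ℤ) : ℂ) • g = (2 : ℂ) • g := by
      exact sub_neg_one_smul g
    rw [this, smul_smul]
    norm_num
  rw [e] at h2
  exact h2
end

section
/- Let $\mathcal{J}_n \subset B = \mathbb{C}[\mathbf{x},\mathbf{y}] \otimes \Lambda[\boldsymbol{\theta}]$ be the ideal generated by diagonal-$S_n$-antisymmetric elements, and $J_n \subset \mathbb{C}[\mathbf{x},\mathbf{y}]$ its even degree-zero-in-$\theta$ analogue. Then for all $k \geq 1$, $\mathcal{J}_n^k = \mathcal{J}_n \cdot J_n^{k-1}$. -/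
open MvPolynomial

/-- Antisymmetry of an ordinary polynomial for the diagonal `S_n`-action. -/
def IsAntisymP {n : ℕ} (p : PP n) : Prop :=
  ∀ σ : Equiv.Perm (Fin n),
    rename (Sum.map σ σ) p = ((Equiv.Perm.sign σ : ℤ) : ℂ) • p

/-- The super ideal `𝒥_n ⊆ B` generated by diagonal antisymmetric elements,
viewed as a `ℂ`-submodule of `B`. -/
noncomputable def superJ (n : ℕ) : Submodule ℂ (SP n) :=
  (Submodule.span (SP n) {g : SP n | IsAntisym g}).restrictScalars ℂ

/-- The ideal of `B` generated by the antisymmetric ordinary polynomials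
(the image of `J_n ⊆ ℂ[x,y]` in `B`), viewed as a `ℂ`-submodule of `B`. -/
noncomputable def evenJ (n : ℕ) : Submodule ℂ (SP n) :=
  (Submodule.span (SP n)
    {g : SP n | ∃ p : PP n, IsAntisymP p ∧
      g = Algebra.TensorProduct.includeLeft (S := ℂ) p}).restrictScalars ℂ

open scoped TensorProduct

namespace SuperJ

variable {n : ℕ}

/-- The even variables in `B`. -/
noncomputable def XX (s : Fin n ⊕ Fin n) : SP n := (X s : PP n) ⊗ₜ[ℂ] (1 : ExteriorAlgebra ℂ (Fin n → ℂ))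

/-- The odd variables in `B`. -/
noncomputable def th (i : Fin n) : SP n :=
  (1 : PP n) ⊗ₜ[ℂ] (ExteriorAlgebra.ι ℂ (Pi.single i (1 : ℂ)))

/-- The odd derivative with respect to `θ_i`. -/
noncomputable def dd (i : Fin n) : SP n →ₗ[ℂ] SP n :=
  LinearMap.lTensor (PP n)
    (CliffordAlgebra.contractLeft (Q := (0 : QuadraticForm ℂ (Fin n → ℂ)))
      (LinearMap.proj i : (Fin n → ℂ) →ₗ[ℂ] ℂ))

/-- The parity involution. -/
noncomputable def al : SP n →ₐ[ℂ] SP n :=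
  Algebra.TensorProduct.map (AlgHom.id ℂ (PP n))
    (CliffordAlgebra.involute (Q := (0 : QuadraticForm ℂ (Fin n → ℂ))))

/-- The inclusion of polynomials. -/
noncomputable def inc : PP n →ₐ[ℂ] SP n := Algebra.TensorProduct.includeLeft (S := ℂ)

/-- The map setting all `θ_i` to zero. -/
noncomputable def aug : SP n →ₐ[ℂ] PP n :=
  Algebra.TensorProduct.lift (AlgHom.id ℂ (PP n))
    ((Algebra.ofId ℂ (PP n)).comp ExteriorAlgebra.algebraMapInv) (fun _ _ => Commute.all _ _)

/-- The product of all odd variables. -/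
noncomputable def Th : SP n :=
  (1 : PP n) ⊗ₜ[ℂ] (ExteriorAlgebra.ιMulti ℂ n (fun i : Fin n => Pi.single i (1 : ℂ)))

theorem B_ind (T : Submodule ℂ (SP n)) (h1 : (1 : SP n) ∈ T)
    (hX : ∀ s, ∀ b ∈ T, XX s * b ∈ T) (hth : ∀ i, ∀ b ∈ T, th i * b ∈ T) (b : SP n) : b ∈ T := by
  have hR : ∀ (p : PP n), ∀ b ∈ T, inc p * b ∈ T := by
    intro p
    induction p using MvPolynomial.induction_on with
    | C a =>
      intro b hb
      have : inc (C a : PP n) = algebraMap ℂ (SP n) a := by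
        rw [← MvPolynomial.algebraMap_eq]; exact AlgHom.commutes _ _
      rw [this, ← Algebra.smul_def]
      exact T.smul_mem _ hb
    | add p q hp hq =>
      intro b hb
      rw [map_add, add_mul]
      exact T.add_mem (hp b hb) (hq b hb)
    | mul_X p s hp =>
      intro b hb
      rw [map_mul, mul_assoc]
      exact hp _ (hX s b hb)
  have hE : ∀ e : ExteriorAlgebra ℂ (Fin n → ℂ), (1 : PP n) ⊗ₜ[ℂ] e ∈ T := by
    intro e
    induction e using CliffordAlgebra.left_induction with
    | algebraMap r =>
      rw [Algebra.algebraMap_eq_smul_one, TensorProduct.tmul_smul]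
      exact T.smul_mem _ h1
    | add x y hx hy =>
      rw [TensorProduct.tmul_add]
      exact T.add_mem hx hy
    | ι_mul x m hx =>
      have : m = ∑ i, m i • (Pi.single i (1 : ℂ) : Fin n → ℂ) := by
        ext j
        simp [Finset.sum_apply, Pi.single_apply]
      rw [this, map_sum, Finset.sum_mul, TensorProduct.tmul_sum]
      refine T.sum_mem fun i _ => ?_
      rw [map_smul, smul_mul_assoc, TensorProduct.tmul_smul]
      refine T.smul_mem _ ?_
      have := hth i _ hx
      rwa [th, Algebra.TensorProduct.tmul_mul_tmul, one_mul] at this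
  induction b using TensorProduct.induction_on with
  | zero => exact T.zero_mem
  | add x y hx hy => exact T.add_mem hx hy
  | tmul p e =>
    have := hR p _ (hE e)
    rwa [inc, Algebra.TensorProduct.includeLeft_apply, Algebra.TensorProduct.tmul_mul_tmul, mul_one,
      one_mul] at this

theorem inc_comm (p : PP n) (b : SP n) : b * inc p = inc p * b := by
  induction b using TensorProduct.induction_on with
  | zero => simp
  | add x y hx hy => rw [add_mul, mul_add, hx, hy]
  | tmul q e =>
    rw [inc, Algebra.TensorProduct.includeLeft_apply, Algebra.TensorProduct.tmul_mul_tmul,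
      Algebra.TensorProduct.tmul_mul_tmul, mul_one, one_mul, mul_comm]

theorem inc_X (s : Fin n ⊕ Fin n) : inc (X s : PP n) = XX s := rfl

theorem XX_comm (s : Fin n ⊕ Fin n) (b : SP n) : b * XX s = XX s * b := inc_comm _ _

theorem dd_inc (i : Fin n) (p : PP n) (b : SP n) : dd i (inc p * b) = inc p * dd i b := by
  induction b using TensorProduct.induction_on with
  | zero => simp
  | add x y hx hy => rw [mul_add, map_add, map_add, mul_add, hx, hy]
  | tmul q e =>
    rw [inc, Algebra.TensorProduct.includeLeft_apply, Algebra.TensorProduct.tmul_mul_tmul, dd,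
      LinearMap.lTensor_tmul, LinearMap.lTensor_tmul, Algebra.TensorProduct.tmul_mul_tmul, one_mul,
      one_mul]

theorem dd_XX (i : Fin n) (s) (b : SP n) : dd i (XX s * b) = XX s * dd i b := dd_inc _ _ _

theorem dd_one (i : Fin n) : dd i (1 : SP n) = 0 := by
  rw [Algebra.TensorProduct.one_def, dd, LinearMap.lTensor_tmul, CliffordAlgebra.contractLeft_one,
    TensorProduct.tmul_zero]

theorem dd_th (i j : Fin n) (b : SP n) :
    dd i (th j * b) = (if i = j then b else 0) - th j * dd i b := by
  induction b using TensorProduct.induction_on with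
  | zero => simp
  | add x y hx hy =>
    rw [mul_add, map_add, map_add, mul_add, hx, hy]
    split_ifs <;> abel
  | tmul q e =>
    rw [th, Algebra.TensorProduct.tmul_mul_tmul, dd, LinearMap.lTensor_tmul,
      LinearMap.lTensor_tmul, Algebra.TensorProduct.tmul_mul_tmul, one_mul,
      CliffordAlgebra.contractLeft_ι_mul, TensorProduct.tmul_sub]
    congr 1
    by_cases h : i = j
    · simp [h]
    · simp [h]

theorem dd_dd (i j : Fin n) (b : SP n) : dd i (dd j b) = - dd j (dd i b) := by
  induction b using TensorProduct.induction_on with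
  | zero => simp
  | add x y hx hy =>
    simp only [map_add, hx, hy]
    abel
  | tmul q e =>
    simp only [dd, LinearMap.lTensor_tmul]
    rw [CliffordAlgebra.contractLeft_comm, TensorProduct.tmul_neg]

theorem dd_sq (i : Fin n) (b : SP n) : dd i (dd i b) = 0 := by
  induction b using TensorProduct.induction_on with
  | zero => simp
  | add x y hx hy =>
    simp only [map_add, hx, hy, add_zero]
  | tmul q e =>
    simp only [dd, LinearMap.lTensor_tmul]
    rw [CliffordAlgebra.contractLeft_contractLeft, TensorProduct.tmul_zero]

theorem th_th (i j : Fin n) : th i * th j = - (th j * th i : SP n) := by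
  rw [th, th, Algebra.TensorProduct.tmul_mul_tmul, Algebra.TensorProduct.tmul_mul_tmul,
    ← TensorProduct.tmul_neg, eq_neg_of_add_eq_zero_left (ExteriorAlgebra.ι_add_mul_swap _ _)]

theorem al_inc (p : PP n) : al (inc p) = inc p := by
  rw [al, inc, Algebra.TensorProduct.includeLeft_apply, Algebra.TensorProduct.map_tmul, map_one]
  rfl

theorem al_th (i : Fin n) : al (th i) = - th i := by
  rw [al, th, Algebra.TensorProduct.map_tmul, map_one, CliffordAlgebra.involute_ι,
    TensorProduct.tmul_neg]

theorem al_Th : al (Th : SP n) = Th ∨ al (Th : SP n) = - Th := by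
  have key : ∀ l : List (Fin n → ℂ),
      CliffordAlgebra.involute ((l.map (ExteriorAlgebra.ι ℂ)).prod) = (l.map (ExteriorAlgebra.ι ℂ)).prod ∨
      CliffordAlgebra.involute ((l.map (ExteriorAlgebra.ι ℂ)).prod) = - (l.map (ExteriorAlgebra.ι ℂ)).prod := by
    intro l
    induction l with
    | nil => simp
    | cons a l ih =>
      rw [List.map_cons, List.prod_cons, map_mul, CliffordAlgebra.involute_ι]
      rcases ih with h | h
      · right; rw [h, neg_mul]
      · left; rw [h, neg_mul_neg]
  have h := key (List.ofFn (fun i : Fin n => (Pi.single i (1 : ℂ) : Fin n → ℂ)))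
  rw [List.map_ofFn] at h
  rw [al, Th, Algebra.TensorProduct.map_tmul, map_one, ExteriorAlgebra.ιMulti_apply]
  rcases h with h | h
  · left
    exact congrArg (fun z => (1 : PP n) ⊗ₜ[ℂ] z) h
  · right
    rw [← TensorProduct.tmul_neg]
    exact congrArg (fun z => (1 : PP n) ⊗ₜ[ℂ] z) h

theorem aug_inc (p : PP n) : aug (inc p) = p := by
  simp [aug, inc]

theorem aug_th (i : Fin n) : aug (th i) = 0 := by
  simp [aug, th, ExteriorAlgebra.algebraMapInv]

theorem th_Th (i : Fin n) : th i * Th = (0 : SP n) := by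
  rw [th, Th, Algebra.TensorProduct.tmul_mul_tmul]
  have h : ExteriorAlgebra.ιMulti ℂ (n+1) (Fin.cons (Pi.single i (1:ℂ))
      (fun i : Fin n => (Pi.single i (1 : ℂ) : Fin n → ℂ))) = 0 :=
    AlternatingMap.map_eq_zero_of_eq _ _ (i := 0) (j := i.succ) (by simp) (Fin.succ_ne_zero i).symm
  rw [ExteriorAlgebra.ιMulti_succ_apply] at h
  have h2 : Matrix.vecTail (Fin.cons (Pi.single i (1:ℂ))
      (fun i : Fin n => (Pi.single i (1 : ℂ) : Fin n → ℂ)) : Fin (n+1) → (Fin n → ℂ)) =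
      (fun i : Fin n => (Pi.single i (1 : ℂ) : Fin n → ℂ)) := by
    ext; simp [Matrix.vecTail]
  rw [h2, Fin.cons_zero] at h
  rw [h, TensorProduct.tmul_zero]

theorem act_inc (σ : Equiv.Perm (Fin n)) (p : PP n) :
    diagAct σ (inc p) = inc (rename (Sum.map σ σ) p) := by
  rw [diagAct, inc, Algebra.TensorProduct.includeLeft_apply, Algebra.TensorProduct.map_tmul, map_one]
  rfl

theorem act_XX (σ : Equiv.Perm (Fin n)) (s) : diagAct σ (XX s) = XX (Sum.map σ σ s) := by
  rw [← inc_X, act_inc, rename_X, inc_X]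

theorem single_comp (σ : Equiv.Perm (Fin n)) (i : Fin n) :
    LinearMap.funLeft ℂ ℂ ⇑σ⁻¹ (Pi.single i (1:ℂ)) = Pi.single (σ i) 1 := by
  ext j
  simp only [LinearMap.funLeft_apply, Pi.single_apply]
  congr 1
  rw [Equiv.Perm.inv_eq_iff_eq]

theorem act_th (σ : Equiv.Perm (Fin n)) (i) : diagAct σ (th i) = th (σ i) := by
  rw [diagAct, th, Algebra.TensorProduct.map_tmul, map_one, ExteriorAlgebra.map_apply_ι, single_comp]
  rfl

theorem act_Th (σ : Equiv.Perm (Fin n)) :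
    diagAct σ (Th : SP n) = ((Equiv.Perm.sign σ : ℤ) : ℂ) • Th := by
  rw [diagAct, Th, Algebra.TensorProduct.map_tmul, map_one, ExteriorAlgebra.map_apply_ιMulti]
  have : (⇑(LinearMap.funLeft ℂ ℂ ⇑σ⁻¹) ∘ fun i : Fin n => (Pi.single i (1 : ℂ) : Fin n → ℂ)) =
      (fun i : Fin n => (Pi.single i (1 : ℂ) : Fin n → ℂ)) ∘ σ := by
    funext i
    exact single_comp σ i
  rw [this, AlternatingMap.map_perm, ← TensorProduct.tmul_smul]
  congr 1

theorem Th_antisym : IsAntisym (Th : SP n) := act_Th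

theorem dd_list_zero (a : Fin n) (l : List (Fin n)) (h : a ∉ l) :
    dd a ((l.map th).prod : SP n) = 0 := by
  induction l with
  | nil => simpa using dd_one a
  | cons b l ih =>
    rw [List.mem_cons, not_or] at h
    rw [List.map_cons, List.prod_cons, dd_th, if_neg h.1, ih h.2, mul_zero, sub_zero]

theorem one_mem_of_list (T : Submodule ℂ (SP n)) (hd : ∀ i, ∀ b ∈ T, dd i b ∈ T)
    (l : List (Fin n)) (hl : l.Nodup) (h : (l.map th).prod ∈ T) : (1 : SP n) ∈ T := by
  induction l with
  | nil => simpa using h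
  | cons a l ih =>
    rw [List.nodup_cons] at hl
    refine ih hl.2 ?_
    have := hd a _ h
    rwa [List.map_cons, List.prod_cons, dd_th, if_pos rfl, dd_list_zero a l hl.1, mul_zero,
      sub_zero] at this

theorem Th_eq_list : (Th : SP n) = ((List.finRange n).map th).prod := by
  have : ∀ l : List (Fin n), ((l.map th).prod : SP n) = (1 : PP n) ⊗ₜ[ℂ]
      ((l.map (fun i => ExteriorAlgebra.ι ℂ (Pi.single i (1 : ℂ) : Fin n → ℂ))).prod) := by
    intro l
    induction l with
    | nil => rfl
    | cons a l ih =>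
      rw [List.map_cons, List.prod_cons, ih, th, Algebra.TensorProduct.tmul_mul_tmul, one_mul]
      rfl
  rw [this, Th, ExteriorAlgebra.ιMulti_apply, List.ofFn_eq_map]

theorem one_mem (T : Submodule ℂ (SP n)) (hd : ∀ i, ∀ b ∈ T, dd i b ∈ T)
    (h : Th ∈ T) : (1 : SP n) ∈ T :=
  one_mem_of_list T hd _ (List.nodup_finRange n) (Th_eq_list ▸ h)

theorem mneg (a b : SP n) : a * -b = -(a * b) := mul_neg a b
theorem negm (a b : SP n) : -a * b = -(a * b) := neg_mul a b

theorem ring_aux1 {A : Type*} [Ring A] (u t d b a e : A) :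
    u * b - t * (d * b + a * e) = (u - t * d) * b + -t * a * e := by noncomm_ring

theorem ring_aux2 {A : Type*} [Ring A] (u t d : A) :
    u - -t * -d = -(-(u - t * d)) := by noncomm_ring

theorem al_XX (s : Fin n ⊕ Fin n) : al (XX s) = XX s := al_inc _

theorem th_comm (i : Fin n) (a : SP n) : a * th i = th i * al a := by
  let T : Submodule ℂ (SP n) :=
    LinearMap.eqLocus (LinearMap.mulRight ℂ (th i)) ((LinearMap.mulLeft ℂ (th i)).comp al.toLinearMap)
  have hT : ∀ b, b ∈ T ↔ b * th i = th i * al b := fun b => Iff.rfl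
  rw [← hT]
  refine B_ind T ?_ ?_ ?_ a
  · rw [hT, map_one, one_mul, mul_one]
  · intro s b hb
    rw [hT] at hb ⊢
    rw [map_mul, al_XX, mul_assoc, hb, ← mul_assoc, ← mul_assoc, XX_comm]
  · intro j b hb
    rw [hT] at hb ⊢
    rw [map_mul, al_th, mul_assoc, hb, ← mul_assoc, ← mul_assoc, th_th j i, mneg]

theorem leib (i : Fin n) (a b : SP n) : dd i (a * b) = dd i a * b + al a * dd i b := by
  let T : Submodule ℂ (SP n) :=
    LinearMap.eqLocus ((dd i).comp (LinearMap.mulRight ℂ b))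
      ((LinearMap.mulRight ℂ b).comp (dd i) + (LinearMap.mulRight ℂ (dd i b)).comp al.toLinearMap)
  have hT : ∀ a, a ∈ T ↔ dd i (a * b) = dd i a * b + al a * dd i b := fun b => Iff.rfl
  rw [← hT]
  refine B_ind T ?_ ?_ ?_ a
  · rw [hT, map_one al, one_mul, dd_one, zero_mul, zero_add, one_mul]
  · intro s c hc
    rw [hT] at hc ⊢
    rw [map_mul al, al_XX, mul_assoc, dd_XX, hc, dd_XX, mul_add, mul_assoc, mul_assoc]
  · intro j c hc
    rw [hT] at hc ⊢
    rw [map_mul al, al_th, mul_assoc, dd_th, hc, dd_th]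
    split_ifs
    · exact ring_aux1 c (th j) (dd i c) b (al c) (dd i b)
    · have h := ring_aux1 0 (th j) (dd i c) b (al c) (dd i b)
      rw [zero_mul] at h
      exact h

theorem al_dd (i : Fin n) (a : SP n) : al (dd i a) = - dd i (al a) := by
  let T : Submodule ℂ (SP n) :=
    LinearMap.eqLocus (al.toLinearMap.comp (dd i)) (-((dd i).comp al.toLinearMap))
  have hT : ∀ a, a ∈ T ↔ al (dd i a) = - dd i (al a) := fun b => Iff.rfl
  rw [← hT]
  refine B_ind T ?_ ?_ ?_ a
  · rw [hT, dd_one, map_one al, dd_one, map_zero, neg_zero]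
  · intro s c hc
    rw [hT] at hc ⊢
    rw [map_mul al, dd_XX, map_mul al, al_XX, dd_XX, hc, mneg]
  · intro j c hc
    rw [hT] at hc ⊢
    rw [map_mul al, dd_th, map_sub, map_mul al, al_th, hc, negm (th j) (al c), map_neg, dd_th]
    split_ifs
    · exact ring_aux2 (al c) (th j) (dd i (al c))
    · rw [map_zero]
      exact ring_aux2 0 (th j) (dd i (al c))

theorem act_dd (σ : Equiv.Perm (Fin n)) (i : Fin n) (a : SP n) :
    diagAct σ (dd i a) = dd (σ i) (diagAct σ a) := by
  let T : Submodule ℂ (SP n) :=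
    LinearMap.eqLocus ((diagAct σ).toLinearMap.comp (dd i)) ((dd (σ i)).comp (diagAct σ).toLinearMap)
  have hT : ∀ a, a ∈ T ↔ diagAct σ (dd i a) = dd (σ i) (diagAct σ a) := fun b => Iff.rfl
  rw [← hT]
  refine B_ind T ?_ ?_ ?_ a
  · rw [hT, dd_one, map_one (diagAct σ), dd_one, map_zero]
  · intro s c hc
    rw [hT] at hc ⊢
    rw [map_mul (diagAct σ), dd_XX, map_mul (diagAct σ), act_XX, dd_XX, hc]
  · intro j c hc
    rw [hT] at hc ⊢
    rw [map_mul (diagAct σ), dd_th, map_sub, map_mul (diagAct σ), act_th, hc, dd_th]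
    congr 1
    by_cases h : i = j
    · rw [if_pos h, if_pos (congrArg σ h)]
    · rw [if_neg h, if_neg (fun h' => h (σ.injective h')), map_zero]

theorem aug_act (σ : Equiv.Perm (Fin n)) (a : SP n) :
    aug (diagAct σ a) = rename (Sum.map σ σ) (aug a) := by
  let T : Submodule ℂ (SP n) :=
    LinearMap.eqLocus (aug.toLinearMap.comp (diagAct σ).toLinearMap)
      ((rename (Sum.map σ σ)).toLinearMap.comp aug.toLinearMap)
  have hT : ∀ a, a ∈ T ↔ aug (diagAct σ a) = rename (Sum.map σ σ) (aug a) := fun b => Iff.rfl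
  rw [← hT]
  refine B_ind T ?_ ?_ ?_ a
  · rw [hT, map_one, map_one, map_one]
  · intro s c hc
    rw [hT] at hc ⊢
    rw [map_mul, map_mul, map_mul, map_mul, hc, act_XX, ← inc_X, aug_inc, ← inc_X, aug_inc, rename_X]
  · intro j c hc
    rw [hT] at hc ⊢
    rw [map_mul, map_mul, map_mul, act_th, aug_th, aug_th, zero_mul, zero_mul, map_zero]

theorem Th_th (i : Fin n) : (Th : SP n) * th i = 0 := by
  rw [th_comm]
  rcases al_Th (n := n) with h | h
  · rw [h, th_Th]
  · rw [h, mneg, th_Th, neg_zero]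

theorem Th_mul (a : SP n) : Th * a = Th * inc (aug a) := by
  let T : Submodule ℂ (SP n) :=
    LinearMap.eqLocus (LinearMap.mulLeft ℂ Th)
      ((LinearMap.mulLeft ℂ Th).comp (inc.toLinearMap.comp aug.toLinearMap))
  have hT : ∀ a, a ∈ T ↔ Th * a = Th * inc (aug a) := fun b => Iff.rfl
  rw [← hT]
  refine B_ind T ?_ ?_ ?_ a
  · rw [hT, map_one, map_one]
  · intro s c hc
    rw [hT] at hc ⊢
    rw [map_mul, map_mul, ← inc_X, aug_inc, ← mul_assoc, ← mul_assoc, inc_comm, mul_assoc,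
      mul_assoc, hc]
  · intro j c hc
    rw [hT]
    rw [map_mul, aug_th, zero_mul, map_zero, mul_zero, ← mul_assoc, Th_th, zero_mul]

theorem act_mul (σ τ : Equiv.Perm (Fin n)) (a : SP n) :
    diagAct σ (diagAct τ a) = diagAct (σ * τ) a := by
  let T : Submodule ℂ (SP n) :=
    LinearMap.eqLocus ((diagAct σ).toLinearMap.comp (diagAct τ).toLinearMap)
      (diagAct (σ * τ)).toLinearMap
  have hT : ∀ a, a ∈ T ↔ diagAct σ (diagAct τ a) = diagAct (σ * τ) a := fun b => Iff.rfl
  rw [← hT]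
  refine B_ind T ?_ ?_ ?_ a
  · rw [hT, map_one, map_one, map_one]
  · intro s c hc
    rw [hT] at hc ⊢
    rw [map_mul, map_mul, map_mul, hc, act_XX, act_XX, act_XX, Sum.map_map]
    rfl
  · intro j c hc
    rw [hT] at hc ⊢
    rw [map_mul, map_mul, map_mul, hc, act_th, act_th, act_th]
    rfl

/-- The monomial `x_m^a y_m^b` in `PP n`. -/
noncomputable def mono (a b : ℕ) (m : Fin n) : PP n := X (Sum.inl m) ^ a * X (Sum.inr m) ^ b

/-- The operators `x_m^a y_m^b ∂_m^ε`. -/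
noncomputable def op (e : Bool) (a b : ℕ) (m : Fin n) : SP n →ₗ[ℂ] SP n :=
  (LinearMap.mulLeft ℂ (inc (mono a b m))).comp (if e then dd m else LinearMap.id)

theorem op_true (a b : ℕ) (m : Fin n) (x : SP n) : op true a b m x = inc (mono a b m) * dd m x := rfl
theorem op_false (a b : ℕ) (m : Fin n) (x : SP n) : op false a b m x = inc (mono a b m) * x := rfl

/-- The polarized power-sum operators. -/
noncomputable def OO (e : Bool) (a b : ℕ) : SP n →ₗ[ℂ] SP n := ∑ m, op e a b m

theorem OO_apply (e : Bool) (a b : ℕ) (x : SP n) : OO e a b x = ∑ m, op e a b m x := by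
  rw [OO, LinearMap.sum_apply]

theorem act_op (σ : Equiv.Perm (Fin n)) (e : Bool) (a b : ℕ) (m : Fin n) (x : SP n) :
    diagAct σ (op e a b m x) = op e a b (σ m) (diagAct σ x) := by
  have h : rename (Sum.map σ σ) (mono a b m) = mono a b (σ m) := by
    simp [mono, rename_X]
  cases e
  · rw [op_false, op_false, map_mul, act_inc, h]
  · rw [op_true, op_true, map_mul, act_inc, h, act_dd]

theorem act_OO (σ : Equiv.Perm (Fin n)) (e : Bool) (a b : ℕ) (x : SP n) :
    diagAct σ (OO e a b x) = OO e a b (diagAct σ x) := by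
  rw [OO_apply, OO_apply, map_sum]
  simp_rw [act_op]
  exact Equiv.sum_comp σ (fun m => op e a b m (diagAct σ x))

theorem OO_leib (a b : ℕ) (x y : SP n) :
    OO true a b (x * y) = OO true a b x * y + al x * OO true a b y := by
  simp_rw [OO_apply, op_true, leib, Finset.sum_mul, Finset.mul_sum]
  rw [← Finset.sum_add_distrib]
  refine Finset.sum_congr rfl fun m _ => ?_
  rw [mul_add, ← mul_assoc, ← mul_assoc, ← mul_assoc, inc_comm]

theorem OO_false_eq (a b : ℕ) (x : SP n) :
    OO false a b x = (∑ m, inc (mono a b m)) * x := by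
  simp_rw [OO_apply, op_false, Finset.sum_mul]

/-- Generators `D ⋯ D Θ`. -/
inductive W : SP n → Prop
  | base : W Th
  | step (a b : ℕ) (f : SP n) : W f → W (OO true a b f)

theorem W_al {f : SP n} (hf : W f) : al f = f ∨ al f = - f := by
  induction hf with
  | base => exact al_Th
  | step a b f hf ih =>
    have h : al (OO true a b f) = - OO true a b (al f) := by
      simp_rw [OO_apply, op_true, map_sum, map_mul, al_inc, al_dd, mneg]
      exact Finset.sum_neg_distrib _
    rcases ih with ih | ih
    · right; rw [h, ih]
    · left; rw [h, ih, map_neg, neg_neg]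

/-- The left ideal generated by the `D ⋯ D Θ`. -/
noncomputable def JW (n : ℕ) : Submodule (SP n) (SP n) := Submodule.span (SP n) {f | W f}

theorem JW_OO (e : Bool) (a b : ℕ) (x : SP n) (hx : x ∈ JW n) : OO e a b x ∈ JW n := by
  cases e
  · rw [OO_false_eq]
    exact Submodule.smul_mem _ _ hx
  · induction hx using Submodule.span_induction with
    | mem x h => exact Submodule.subset_span (W.step a b x h)
    | zero => rw [map_zero]; exact Submodule.zero_mem _
    | add x y _ _ hx hy => rw [map_add]; exact Submodule.add_mem _ hx hy
    | smul c x hx' hx =>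
      rw [smul_eq_mul, OO_leib]
      exact Submodule.add_mem _ (Submodule.smul_mem _ _ hx') (Submodule.smul_mem _ _ hx)

/-- Antisymmetrization. -/
noncomputable def Alt : SP n →ₗ[ℂ] SP n :=
  ∑ σ : Equiv.Perm (Fin n), ((Equiv.Perm.sign σ : ℤ) : ℂ) • (diagAct σ).toLinearMap

theorem Alt_apply (x : SP n) :
    Alt x = ∑ σ : Equiv.Perm (Fin n), ((Equiv.Perm.sign σ : ℤ) : ℂ) • diagAct σ x := by
  simp [Alt, LinearMap.sum_apply]

theorem sign_sq (σ : Equiv.Perm (Fin n)) :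
    ((Equiv.Perm.sign σ : ℤ) : ℂ) * ((Equiv.Perm.sign σ : ℤ) : ℂ) = 1 := by
  rcases Int.units_eq_one_or (Equiv.Perm.sign σ) with h | h <;> simp [h]

theorem Alt_act (τ : Equiv.Perm (Fin n)) (x : SP n) :
    Alt (diagAct τ x) = ((Equiv.Perm.sign τ : ℤ) : ℂ) • Alt x := by
  rw [Alt_apply, Alt_apply, Finset.smul_sum,
    ← Equiv.sum_comp (Equiv.mulRight τ) (fun σ => ((Equiv.Perm.sign τ : ℤ) : ℂ) •
      ((Equiv.Perm.sign σ : ℤ) : ℂ) • diagAct σ x)]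
  refine Finset.sum_congr rfl fun σ _ => ?_
  rw [act_mul, smul_smul, Equiv.coe_mulRight, Equiv.Perm.sign_mul]
  congr 1
  push_cast
  rw [mul_comm ((Equiv.Perm.sign σ : ℤ) : ℂ), ← mul_assoc, sign_sq, one_mul]

theorem Alt_antisym {x : SP n} (hx : IsAntisym x) : Alt x = (n.factorial : ℂ) • x := by
  rw [Alt_apply]
  have : ∀ σ : Equiv.Perm (Fin n), ((Equiv.Perm.sign σ : ℤ) : ℂ) • diagAct σ x = x := by
    intro σ
    rw [hx σ, smul_smul, sign_sq, one_smul]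
  simp_rw [this]
  rw [Finset.sum_const, Finset.card_univ, Fintype.card_perm, Fintype.card_fin, Nat.cast_smul_eq_nsmul]

theorem Alt_OO (e : Bool) (a b : ℕ) (x : SP n) : Alt (OO e a b x) = OO e a b (Alt x) := by
  rw [Alt_apply, Alt_apply, map_sum]
  simp_rw [map_smul, act_OO]

/-- Monomials `p ∂_w Θ` only involving indices in `U`. -/
inductive Mon (U : Finset (Fin n)) : SP n → Prop
  | base : Mon U Th
  | x (m : Fin n) (b : SP n) : m ∈ U → Mon U b → Mon U (XX (Sum.inl m) * b)
  | y (m : Fin n) (b : SP n) : m ∈ U → Mon U b → Mon U (XX (Sum.inr m) * b)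
  | d (m : Fin n) (b : SP n) : m ∈ U → Mon U b → Mon U (dd m b)

theorem inc_mono (a b : ℕ) (m : Fin n) :
    inc (mono a b m) = XX (Sum.inl m) ^ a * XX (Sum.inr m) ^ b := by
  rw [mono, map_mul, map_pow, map_pow, inc_X, inc_X]

theorem Mon_mono (U : Finset (Fin n)) (m : Fin n) (hm : m ∈ U) (a b : ℕ) (x : SP n) (hx : Mon U x) :
    Mon U (inc (mono a b m) * x) := by
  have hy : Mon U (XX (Sum.inr m) ^ b * x) := by
    induction b with
    | zero => simpa using hx
    | succ b ih => rw [pow_succ', mul_assoc]; exact Mon.y m _ hm ih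
  rw [inc_mono, mul_assoc]
  induction a with
  | zero => simpa using hy
  | succ a ih => rw [pow_succ', mul_assoc]; exact Mon.x m _ hm ih

theorem Mon_op (U : Finset (Fin n)) (m : Fin n) (hm : m ∈ U) (e : Bool) (a b : ℕ) (x : SP n)
    (hx : Mon U x) : Mon U (op e a b m x) := by
  cases e
  · exact Mon_mono U m hm a b x hx
  · exact Mon_mono U m hm a b _ (Mon.d m x hm hx)

theorem Mon_act (U : Finset (Fin n)) (τ : Equiv.Perm (Fin n)) (hτ : ∀ m ∈ U, τ m = m) (x : SP n)
    (hx : Mon U x) : diagAct τ x = ((Equiv.Perm.sign τ : ℤ) : ℂ) • x := by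
  induction hx with
  | base => exact act_Th τ
  | x m b hm _ ih => rw [map_mul, act_XX, ih, Sum.map_inl, hτ m hm, mul_smul_comm]
  | y m b hm _ ih => rw [map_mul, act_XX, ih, Sum.map_inr, hτ m hm, mul_smul_comm]
  | d m b hm _ ih => rw [act_dd, ih, hτ m hm, map_smul]

theorem op_XX (e : Bool) (a b : ℕ) (m : Fin n) (s) (x : SP n) :
    XX s * op e a b m x = op e a b m (XX s * x) := by
  cases e
  · rw [op_false, op_false, ← mul_assoc, ← mul_assoc, inc_comm]
  · rw [op_true, op_true, dd_XX, ← mul_assoc, ← mul_assoc, inc_comm]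

theorem Mon_split (U : Finset (Fin n)) (l : Fin n) (x : SP n) (hx : Mon (insert l U) x) :
    ∃ (c : ℂ) (e : Bool) (a b : ℕ) (x' : SP n), Mon U x' ∧ x = c • op e a b l x' := by
  induction hx with
  | base =>
    exact ⟨1, false, 0, 0, Th, Mon.base, by rw [op_false, mono]; simp⟩
  | x m y hm _ ih =>
    obtain ⟨c, e, a, b, x', hx', rfl⟩ := ih
    rw [Finset.mem_insert] at hm
    rcases hm with rfl | hm
    · refine ⟨c, e, a + 1, b, x', hx', ?_⟩
      rw [mul_smul_comm]
      cases e
      · rw [op_false, op_false, inc_mono, inc_mono, pow_succ', mul_assoc, mul_assoc, mul_assoc]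
      · rw [op_true, op_true, inc_mono, inc_mono, pow_succ', mul_assoc, mul_assoc, mul_assoc]
    · refine ⟨c, e, a, b, _, Mon.x m x' hm hx', ?_⟩
      rw [mul_smul_comm, op_XX]
  | y m y hm _ ih =>
    obtain ⟨c, e, a, b, x', hx', rfl⟩ := ih
    rw [Finset.mem_insert] at hm
    rcases hm with rfl | hm
    · refine ⟨c, e, a, b + 1, x', hx', ?_⟩
      rw [mul_smul_comm]
      have h : XX (Sum.inr m) * inc (mono a b m) = inc (mono a (b+1) m) := by
        rw [← inc_X, ← map_mul, mono, mono]
        congr 1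
        ring
      cases e
      · rw [op_false, op_false, ← mul_assoc, h]
      · rw [op_true, op_true, ← mul_assoc, h]
    · refine ⟨c, e, a, b, _, Mon.y m x' hm hx', ?_⟩
      rw [mul_smul_comm, op_XX]
  | d m y hm _ ih =>
    obtain ⟨c, e, a, b, x', hx', rfl⟩ := ih
    rw [Finset.mem_insert] at hm
    rcases hm with rfl | hm
    · cases e
      · refine ⟨c, true, a, b, x', hx', ?_⟩
        rw [map_smul, op_true, op_false, dd_inc]
      · refine ⟨0, true, a, b, x', hx', ?_⟩
        rw [map_smul, op_true, dd_inc, dd_sq, mul_zero, zero_smul, smul_zero]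
    · cases e
      · refine ⟨c, false, a, b, _, Mon.d m x' hm hx', ?_⟩
        rw [map_smul, op_false, op_false, dd_inc]
      · refine ⟨-c, true, a, b, _, Mon.d m x' hm hx', ?_⟩
        rw [map_smul, op_true, op_true, dd_inc, dd_dd, mneg]
        exact (smul_neg c _).trans (neg_smul c _).symm

theorem JW_smul (c : ℂ) {x : SP n} (hx : x ∈ JW n) : c • x ∈ JW n := by
  have h : c • x = algebraMap ℂ (SP n) c * x := Algebra.smul_def c x
  rw [h]
  exact Submodule.smul_mem _ _ hx

theorem Alt_Mon (U : Finset (Fin n)) : ∀ x : SP n, Mon U x → Alt x ∈ JW n := by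
  induction U using Finset.induction_on with
  | empty =>
    intro x hx
    have hx' : IsAntisym x := fun τ => Mon_act ∅ τ (by simp) x hx
    have : x = Th := by
      cases hx with
      | base => rfl
      | x m b hm _ => simp at hm
      | y m b hm _ => simp at hm
      | d m b hm _ => simp at hm
    rw [Alt_antisym hx', this]
    exact JW_smul _ (Submodule.subset_span W.base)
  | insert l U hl ih =>
    intro x hx
    obtain ⟨c, e, a, b, x', hx', rfl⟩ := Mon_split U l x hx
    rw [map_smul]
    refine JW_smul c ?_
    have key : ∀ m ∉ U, Alt (op e a b m x') = Alt (op e a b l x') := by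
      intro m hm
      by_cases hml : m = l
      · rw [hml]
      · have h1 := Alt_act (Equiv.swap l m) (op e a b l x')
        rw [act_op, Equiv.swap_apply_left, Mon_act U (Equiv.swap l m) ?_ x' hx', map_smul, map_smul] at h1
        · have h2 := congrArg (fun z => ((Equiv.Perm.sign (Equiv.swap l m) : ℤ) : ℂ) • z) h1
          simpa only [smul_smul, sign_sq, one_smul] using h2
        · intro k hk
          exact Equiv.swap_apply_of_ne_of_ne (fun h => hl (h ▸ hk)) (fun h => hm (h ▸ hk))
    have h1 : Alt (OO e a b x') ∈ JW n := by
      rw [Alt_OO]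
      exact JW_OO e a b _ (ih x' hx')
    rw [OO_apply, map_sum, ← Finset.sum_add_sum_compl U] at h1
    have h2 : ∑ m ∈ U, Alt (op e a b m x') ∈ JW n :=
      Submodule.sum_mem _ fun m hm => ih _ (Mon_op U m hm e a b x' hx')
    have h3 := (Submodule.add_mem_iff_right _ h2).1 h1
    rw [Finset.sum_congr rfl (fun m hm => key m (Finset.mem_compl.1 hm)), Finset.sum_const,
      ← Nat.cast_smul_eq_nsmul ℂ] at h3
    have h4 : ((Uᶜ.card : ℕ) : ℂ) ≠ 0 := by
      rw [Nat.cast_ne_zero]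
      exact Finset.card_ne_zero_of_mem (Finset.mem_compl.2 hl)
    have h5 := JW_smul ((Uᶜ.card : ℂ)⁻¹) h3
    rwa [smul_smul, inv_mul_cancel₀ h4, one_smul] at h5

theorem Mon_span (x : SP n) : x ∈ Submodule.span ℂ {y : SP n | Mon Finset.univ y} := by
  set T := Submodule.span ℂ {y : SP n | Mon Finset.univ y} with hT
  have hd : ∀ i, ∀ b ∈ T, dd i b ∈ T := by
    intro i b hb
    induction hb using Submodule.span_induction with
    | mem x h => exact Submodule.subset_span (Mon.d i x (Finset.mem_univ _) h)
    | zero => rw [map_zero]; exact T.zero_mem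
    | add x y _ _ hx hy => rw [map_add]; exact T.add_mem hx hy
    | smul c x _ hx => rw [map_smul]; exact T.smul_mem _ hx
  have hX : ∀ s, ∀ b ∈ T, XX s * b ∈ T := by
    intro s b hb
    induction hb using Submodule.span_induction with
    | mem x h =>
      cases s with
      | inl m => exact Submodule.subset_span (Mon.x m x (Finset.mem_univ _) h)
      | inr m => exact Submodule.subset_span (Mon.y m x (Finset.mem_univ _) h)
    | zero => rw [mul_zero]; exact T.zero_mem
    | add x y _ _ hx hy => rw [mul_add]; exact T.add_mem hx hy
    | smul c x _ hx => rw [mul_smul_comm]; exact T.smul_mem _ hx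
  refine B_ind T (one_mem T hd (Submodule.subset_span Mon.base)) hX ?_ x
  intro i b hb
  induction hb using Submodule.span_induction with
  | mem x h =>
    induction h with
    | base => rw [th_Th]; exact T.zero_mem
    | x m b hm hb ih => rw [← mul_assoc, XX_comm, mul_assoc]; exact hX _ _ ih
    | y m b hm hb ih => rw [← mul_assoc, XX_comm, mul_assoc]; exact hX _ _ ih
    | d m b hm hb ih =>
      have h := dd_th m i b
      have h' : th i * dd m b = (if m = i then b else 0) - dd m (th i * b) := by
        rw [h]; abel
      rw [h']
      refine T.sub_mem ?_ (hd _ _ ih)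
      split_ifs
      · exact Submodule.subset_span hb
      · exact T.zero_mem
  | zero => rw [mul_zero]; exact T.zero_mem
  | add x y _ _ hx hy => rw [mul_add]; exact T.add_mem hx hy
  | smul c x _ hx => rw [mul_smul_comm]; exact T.smul_mem _ hx

theorem antisym_mem_JW {x : SP n} (hx : IsAntisym x) : x ∈ JW n := by
  have h : Alt x ∈ JW n := by
    have := Mon_span x
    clear hx
    induction this using Submodule.span_induction with
    | mem x h => exact Alt_Mon _ x h
    | zero => rw [map_zero]; exact Submodule.zero_mem _
    | add x y _ _ hx hy => rw [map_add]; exact Submodule.add_mem _ hx hy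
    | smul c x _ hx => rw [map_smul]; exact JW_smul _ hx
  rw [Alt_antisym hx] at h
  have h4 : (n.factorial : ℂ) ≠ 0 := Nat.cast_ne_zero.2 n.factorial_ne_zero
  have h5 := JW_smul ((n.factorial : ℂ)⁻¹) h
  rwa [smul_smul, inv_mul_cancel₀ h4, one_smul] at h5

/-- The left ideal generated by products of an antisymmetric element and an antisymmetric
polynomial. -/
noncomputable def NN (n : ℕ) : Submodule (SP n) (SP n) :=
  Submodule.span (SP n) {z | ∃ f p, IsAntisym f ∧ IsAntisymP p ∧ z = f * inc p}

theorem antisym_OO (e : Bool) (a b : ℕ) {f : SP n} (hf : IsAntisym f) : IsAntisym (OO e a b f) := by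
  intro σ
  rw [act_OO, hf σ, map_smul]

theorem OO_inc (a b : ℕ) (f : SP n) (p : PP n) :
    OO true a b (f * inc p) = OO true a b f * inc p := by
  rw [inc_comm, inc_comm]
  simp_rw [OO_apply, op_true, dd_inc, Finset.mul_sum, ← mul_assoc]
  refine Finset.sum_congr rfl fun m _ => ?_
  rw [inc_comm]

theorem NN_OO (a b : ℕ) (x : SP n) (hx : x ∈ NN n) : OO true a b x ∈ NN n := by
  induction hx using Submodule.span_induction with
  | mem x h =>
    obtain ⟨f, p, hf, hp, rfl⟩ := h
    exact Submodule.subset_span ⟨_, p, antisym_OO true a b hf, hp, OO_inc a b f p⟩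
  | zero => rw [map_zero]; exact Submodule.zero_mem _
  | add x y _ _ hx hy => rw [map_add]; exact Submodule.add_mem _ hx hy
  | smul c x hx' hx =>
    rw [smul_eq_mul, OO_leib]
    exact Submodule.add_mem _ (Submodule.smul_mem _ _ hx') (Submodule.smul_mem _ _ hx)

/-- The filtration by nilpotency under the odd derivatives. -/
noncomputable def Fil (n : ℕ) : ℕ → Submodule ℂ (SP n)
  | 0 => ⊥
  | d + 1 => ⨅ m : Fin n, (Fil n d).comap (dd m)

theorem Fil_succ (d : ℕ) (x : SP n) : x ∈ Fil n (d + 1) ↔ ∀ m, dd m x ∈ Fil n d := by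
  simp [Fil]

theorem Fil_mono (d : ℕ) : Fil n d ≤ Fil n (d + 1) := by
  induction d with
  | zero => exact bot_le
  | succ d ih =>
    intro x hx
    rw [Fil_succ] at hx ⊢
    exact fun m => ih (hx m)

theorem Fil_inc (d : ℕ) (p : PP n) : ∀ x ∈ Fil n d, inc p * x ∈ Fil n d := by
  induction d with
  | zero =>
    intro x hx
    rw [Fil, Submodule.mem_bot] at hx ⊢
    rw [hx, mul_zero]
  | succ d ih =>
    intro x hx
    rw [Fil_succ] at hx ⊢
    intro m
    rw [dd_inc]
    exact ih _ (hx m)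

theorem Fil_th (d : ℕ) (i : Fin n) : ∀ x ∈ Fil n d, th i * x ∈ Fil n (d + 1) := by
  induction d with
  | zero =>
    intro x hx
    rw [Fil, Submodule.mem_bot] at hx
    rw [hx, mul_zero]
    exact Submodule.zero_mem _
  | succ d ih =>
    intro x hx
    rw [Fil_succ]
    intro m
    rw [dd_th]
    refine Submodule.sub_mem _ ?_ (ih _ ((Fil_succ d x).1 hx m))
    split_ifs
    · exact hx
    · exact Submodule.zero_mem _

theorem Fil_exists (x : SP n) : ∃ d, x ∈ Fil n d := by
  have hm : Monotone (Fil n) := monotone_nat_of_le_succ Fil_mono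
  have h := B_ind (⨆ d, Fil n d) ?_ ?_ ?_ x
  · exact (Submodule.mem_iSup_of_directed _ hm.directed_le).1 h
  · refine Submodule.mem_iSup_of_mem 1 ?_
    rw [Fil_succ]
    intro m
    rw [dd_one]
    exact Submodule.zero_mem _
  · intro s b hb
    obtain ⟨d, hd⟩ := (Submodule.mem_iSup_of_directed _ hm.directed_le).1 hb
    exact Submodule.mem_iSup_of_mem d (Fil_inc d _ b hd)
  · intro i b hb
    obtain ⟨d, hd⟩ := (Submodule.mem_iSup_of_directed _ hm.directed_le).1 hb
    exact Submodule.mem_iSup_of_mem (d + 1) (Fil_th d i b hd)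

theorem aug_antisym {g : SP n} (hg : IsAntisym g) : IsAntisymP (aug g) := by
  intro σ
  rw [← aug_act, hg σ, map_smul]

theorem W_mul_antisym (d : ℕ) : ∀ g : SP n, IsAntisym g → g ∈ Fil n d → ∀ f, W f → f * g ∈ NN n := by
  induction d with
  | zero =>
    intro g _ hg f _
    rw [Fil, Submodule.mem_bot] at hg
    rw [hg, mul_zero]
    exact Submodule.zero_mem _
  | succ d ih =>
    intro g hg hd f hf
    induction hf with
    | base =>
      rw [Th_mul]
      exact Submodule.subset_span ⟨Th, aug g, Th_antisym, aug_antisym hg, rfl⟩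
    | step a b f hf ihf =>
      have h1 := NN_OO a b _ ihf
      have hgd : OO true a b g ∈ Fil n d := by
        rw [OO_apply]
        exact Submodule.sum_mem _ fun m _ => Fil_inc d _ _ ((Fil_succ d g).1 hd m)
      have h2 := ih _ (antisym_OO true a b hg) hgd f hf
      rw [OO_leib] at h1
      refine (Submodule.add_mem_iff_left _ ?_).1 h1
      rcases W_al hf with h | h
      · rwa [h]
      · rw [h, negm]
        exact Submodule.neg_mem _ h2

theorem W_mul_mul {f : SP n} (hf : W f) (g : SP n) (hg : f * g ∈ NN n) (b : SP n) :
    f * (b * g) ∈ NN n := by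
  let T : Submodule ℂ (SP n) := ((NN n).restrictScalars ℂ).comap
    ((LinearMap.mulLeft ℂ f).comp (LinearMap.mulRight ℂ g))
  have hT : ∀ b, b ∈ T ↔ f * (b * g) ∈ NN n := fun b => Iff.rfl
  rw [← hT]
  refine B_ind T ?_ ?_ ?_ b
  · rwa [hT, one_mul]
  · intro s b hb
    rw [hT] at hb ⊢
    rw [mul_assoc, ← mul_assoc, XX_comm, mul_assoc]
    exact Submodule.smul_mem _ _ hb
  · intro i b hb
    rw [hT] at hb ⊢
    rw [mul_assoc, ← mul_assoc, th_comm, mul_assoc]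
    refine Submodule.smul_mem _ (th i) ?_
    rcases W_al hf with h | h
    · rwa [h]
    · rw [h, negm]
      exact Submodule.neg_mem _ hb

theorem superJ_mul_superJ : superJ n * superJ n ≤ superJ n * evenJ n := by
  have hN : ∀ z ∈ NN n, z ∈ superJ n * evenJ n := by
    intro z hz
    induction hz using Submodule.span_induction with
    | mem x h =>
      obtain ⟨f, p, hf, hp, rfl⟩ := h
      exact Submodule.mul_mem_mul (Submodule.subset_span hf)
        (Submodule.subset_span ⟨p, hp, rfl⟩)
    | zero => exact Submodule.zero_mem _
    | add x y _ _ hx hy => exact Submodule.add_mem _ hx hy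
    | smul c x hx0 hx =>
      clear hx0
      rw [smul_eq_mul]
      induction hx using Submodule.mul_induction_on' with
      | mem_mul_mem u hu v hv =>
        rw [← mul_assoc]
        exact Submodule.mul_mem_mul (Submodule.smul_mem (Submodule.span (SP n) _) c hu) hv
      | add x _ y _ hx hy => rw [mul_add]; exact Submodule.add_mem _ hx hy
  rw [Submodule.mul_le]
  intro u hu v hv
  apply hN
  have hu' : u ∈ JW n := by
    refine (Submodule.span_le (p := JW n)).2 ?_ hu
    exact fun x hx => antisym_mem_JW hx
  clear hu
  induction hu' using Submodule.span_induction with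
  | mem f hf =>
    have hv' : v ∈ Submodule.span (SP n) {g : SP n | IsAntisym g} := hv
    clear hv
    induction hv' using Submodule.span_induction with
    | mem g hg =>
      obtain ⟨d, hd⟩ := Fil_exists g
      exact W_mul_antisym d g hg hd f hf
    | zero => rw [mul_zero]; exact Submodule.zero_mem _
    | add x y _ _ hx hy => rw [mul_add]; exact Submodule.add_mem _ hx hy
    | smul c x _ hx => exact W_mul_mul hf x hx c
  | zero => rw [zero_mul]; exact Submodule.zero_mem _
  | add x y _ _ hx hy => rw [add_mul]; exact Submodule.add_mem _ hx hy
  | smul c x _ hx =>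
    rw [smul_eq_mul, mul_assoc]
    exact Submodule.smul_mem _ _ hx

theorem evenJ_le : evenJ n ≤ superJ n := by
  intro x hx
  refine (Submodule.span_le (p := Submodule.span (SP n) {g : SP n | IsAntisym g})).2 ?_ hx
  rintro _ ⟨p, hp, rfl⟩
  refine Submodule.subset_span fun σ => ?_
  have := act_inc σ p
  rw [hp σ, map_smul] at this
  exact this

theorem pow_aux {A : Type*} [Ring A] [Algebra ℂ A] (P Q : Submodule ℂ A) (h1 : P * P ≤ P * Q)
    (h2 : Q ≤ P) (k : ℕ) : P ^ (k + 1) = P * Q ^ k := by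
  induction k with
  | zero => rw [zero_add, pow_one, pow_zero, mul_one]
  | succ k ih =>
    apply le_antisymm
    · rw [pow_succ', ih, ← mul_assoc, pow_succ' Q, ← mul_assoc]
      exact mul_le_mul' h1 le_rfl
    · rw [pow_succ P, ih, mul_assoc, pow_succ Q]
      exact mul_le_mul' le_rfl (mul_le_mul' le_rfl h2)

end SuperJ

/-- For all `k ≥ 1`, `𝒥_n^k = 𝒥_n · J_n^{k-1}`. -/
theorem superJ_pow (n : ℕ) (k : ℕ) (hk : 1 ≤ k) :
    superJ n ^ k = superJ n * evenJ n ^ (k - 1) := by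
  obtain ⟨k, rfl⟩ := Nat.exists_eq_add_of_le' hk
  rw [Nat.add_sub_cancel]
  clear hk
  exact SuperJ.pow_aux _ _ SuperJ.superJ_mul_superJ SuperJ.evenJ_le k
end
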